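/- arXiv:1705.06213 — 7 statements merged into one kernel-verified Lean document; each statement's English description precedes it below -/
import Mathlib

section
/- Let G be a group generated by a finite set Σ, acting without edge inversions on a simplicial tree T, and suppose no vertex of T is fixed by every element of G. Then there exists a hyperbolic element h ∈ G of word length at most 2 with respect to Σ; more precisely, either some element of Σ is hyperbolic, or there exist elliptic elements s1, s2 ∈ Σ with Fix(s1) ∩ Fix(s2) = ∅, in which case h = s1·s2 is hyperbolic. -/
open SimpleGraph Pointwise

section TreeDefs

variable {G : Type*} [Group G]

/-- The action of `G` on the vertices preserves adjacency. -/
def ActsByAut (G : Type*) [Group G] {V : Type*} [MulAction G V] (T : SimpleGraph V) : Prop :=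
  ∀ (g : G) (v w : V), T.Adj v w → T.Adj (g • v) (g • w)

/-- The action has no edge inversions: no element swaps the endpoints of an edge. -/
def NoEdgeInversion (G : Type*) [Group G] {V : Type*} [MulAction G V] (T : SimpleGraph V) : Prop :=
  ∀ (g : G) (v w : V), T.Adj v w → ¬(g • v = w ∧ g • w = v)

/-- The set of vertices fixed by `g`. -/
def Fixed (V : Type*) [MulAction G V] (g : G) : Set V := {v | g • v = v}

/-- `g` is elliptic: it fixes some vertex. -/
def IsElliptic (V : Type*) [MulAction G V] (g : G) : Prop := ∃ v : V, g • v = v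

/-- `g` is hyperbolic: it fixes no vertex. -/
def IsHyperbolic (V : Type*) [MulAction G V] (g : G) : Prop := ¬ ∃ v : V, g • v = v

/-- Translation length of `g`: the infimum of `d(v, g • v)` over all vertices `v`. -/
noncomputable def transLen {V : Type*} [MulAction G V] (T : SimpleGraph V) (g : G) : ℕ :=
  ⨅ v : V, T.dist v (g • v)

/-- The axis of a (hyperbolic) element: the vertices moved exactly the translation length. -/
noncomputable def Axis {V : Type*} [MulAction G V] (T : SimpleGraph V) (g : G) : Set V :=
  {v | T.dist v (g • v) = transLen T g}

/-- Diameter (in `ℕ∞`) of a set of vertices: the sup of pairwise simplicial distances. -/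
noncomputable def setDiam {V : Type*} (T : SimpleGraph V) (S : Set V) : ℕ∞ :=
  ⨆ v ∈ S, ⨆ w ∈ S, (T.dist v w : ℕ∞)

/-- Minimal simplicial distance between two sets of vertices. -/
noncomputable def setDist {V : Type*} (T : SimpleGraph V) (A B : Set V) : ℕ :=
  sInf {n : ℕ | ∃ v ∈ A, ∃ w ∈ B, T.dist v w = n}

/-- The action of `G` on `T` is `k`-acylindrical: the fixed-point set of every nontrivial
elliptic element has diameter at most `k`. -/
def AcylindricalAction {V : Type*} (T : SimpleGraph V) (G : Type*) [Group G] [MulAction G V]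
    (k : ℕ) : Prop :=
  ∀ g : G, g ≠ 1 → IsElliptic V g → setDiam T (Fixed V g) ≤ (k : ℕ∞)

/-- `a` and `b` generate a rank 2 free product in `G`: the canonical homomorphism
`⟨a⟩ ∗ ⟨b⟩ → G` from the free product of the cyclic subgroups generated by `a` and `b`
is injective. -/
def IsRank2FreeProduct {G : Type*} [Group G] (a b : G) : Prop :=
  Function.Injective
    (Monoid.Coprod.lift (Subgroup.zpowers a).subtype (Subgroup.zpowers b).subtype)

/-- `a` and `b` freely generate a rank 2 free subgroup of `G`: the homomorphism from the
free group on two generators sending the generators to `a` and `b` is injective. -/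
def FreelyGeneratesFreeSubgroup {G : Type*} [Group G] (a b : G) : Prop :=
  Function.Injective ((FreeGroup.lift (fun i : Bool => if i then a else b)) : FreeGroup Bool →* G)

/-- `a` and `b` freely generate a rank 2 free subsemigroup of `G`: the monoid homomorphism
from the free monoid on two generators sending the generators to `a` and `b` is injective. -/
def FreelyGeneratesFreeSubsemigroup {G : Type*} [Monoid G] (a b : G) : Prop :=
  Function.Injective ((FreeMonoid.lift (fun i : Bool => if i then a else b)) : FreeMonoid Bool →* G)

/-- A line in a simplicial tree: the image of an isometric embedding of `ℤ`. -/
def IsLine {V : Type*} (T : SimpleGraph V) (L : Set V) : Prop :=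
  ∃ f : ℤ → V, (∀ m n : ℤ, T.dist (f m) (f n) = (m - n).natAbs) ∧ L = Set.range f

end TreeDefs

/-- `m` lies on the geodesic from `a` to `b`. -/
def Btw8 {V : Type*} (T : SimpleGraph V) (a m b : V) : Prop :=
  T.dist a m + T.dist m b = T.dist a b

theorem btw8_symm {V : Type*} {T : SimpleGraph V} {a m b : V} (h : Btw8 T a m b) :
    Btw8 T b m a := by
  unfold Btw8 at *
  rw [T.dist_comm (u := b) (v := m), T.dist_comm (u := m) (v := a),
    T.dist_comm (u := b) (v := a)]
  omega

theorem btw8_unique {V : Type*} {T : SimpleGraph V} (hT : T.IsTree) {a m m' b : V}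
    (h : Btw8 T a m b) (h' : Btw8 T a m' b) (hd : T.dist a m = T.dist a m') : m = m' := by
  unfold Btw8 at *
  obtain ⟨p, hp⟩ := hT.1.exists_walk_length_eq_dist a m
  obtain ⟨q, hq⟩ := hT.1.exists_walk_length_eq_dist m b
  obtain ⟨p', hp'⟩ := hT.1.exists_walk_length_eq_dist a m'
  obtain ⟨q', hq'⟩ := hT.1.exists_walk_length_eq_dist m' b
  have h1 : (p.append q).IsPath :=
    Walk.isPath_of_length_eq_dist _ (by rw [Walk.length_append]; omega)
  have h2 : (p'.append q').IsPath :=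
    Walk.isPath_of_length_eq_dist _ (by rw [Walk.length_append]; omega)
  have h3 : p.append q = p'.append q' := (hT.existsUnique_path a b).unique h1 h2
  have h4 : (p.append q).getVert p.length = m := by
    rw [Walk.getVert_append]; simp
  have h5 : (p'.append q').getVert p'.length = m' := by
    rw [Walk.getVert_append]; simp
  rw [← h4, ← h5, h3, hp, hp', hd]

theorem btw8_of_mem_support {V : Type*} {T : SimpleGraph V} (hT : T.IsTree) {a b x : V}
    (p : T.Walk a b) (hp : p.length = T.dist a b) (hx : x ∈ p.support) : Btw8 T a x b := by
  classical
  unfold Btw8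
  have h1 := p.take_spec hx
  have h2 := congrArg Walk.length h1
  rw [Walk.length_append] at h2
  have h3 := T.dist_le (p.takeUntil x hx)
  have h4 := T.dist_le (p.dropUntil x hx)
  have h5 : T.dist a b ≤ T.dist a x + T.dist x b := hT.1.dist_triangle
  omega

theorem exists_median8 {V : Type*} {T : SimpleGraph V} (hT : T.IsTree) (a b c : V) :
    ∃ m, Btw8 T a m b ∧ Btw8 T a m c ∧ Btw8 T b m c := by
  classical
  have hex : ∃ n m, Btw8 T a m b ∧ Btw8 T a m c ∧ T.dist m b = n :=
    ⟨_, a, by simp [Btw8], by simp [Btw8], rfl⟩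
  obtain ⟨m, hb, hc, hn⟩ := Nat.find_spec hex
  refine ⟨m, hb, hc, ?_⟩
  obtain ⟨p, hp⟩ := hT.1.exists_walk_length_eq_dist m b
  obtain ⟨q, hq⟩ := hT.1.exists_walk_length_eq_dist m c
  have hpp := p.isPath_of_length_eq_dist hp
  have hqp := q.isPath_of_length_eq_dist hq
  have key : ∀ x, x ∈ p.support → x ∈ q.support → x = m := by
    intro x hxp hxq
    have h1 := btw8_of_mem_support hT p hp hxp
    have h2 := btw8_of_mem_support hT q hq hxq
    by_contra hne
    have hpos := hT.1.pos_dist_of_ne (Ne.symm hne)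
    unfold Btw8 at h1 h2 hb hc
    have t1 : T.dist a b ≤ T.dist a x + T.dist x b := hT.1.dist_triangle
    have t2 : T.dist a c ≤ T.dist a x + T.dist x c := hT.1.dist_triangle
    have t3 : T.dist a x ≤ T.dist a m + T.dist m x := hT.1.dist_triangle
    have hmin := Nat.find_min' hex (m := T.dist x b)
      ⟨x, by unfold Btw8; omega, by unfold Btw8; omega, rfl⟩
    omega
  have hpath : (p.reverse.append q).IsPath := by
    rw [Walk.isPath_def, Walk.support_append, List.nodup_append']
    refine ⟨hpp.reverse.support_nodup, hqp.support_nodup.tail, ?_⟩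
    intro x hx hx'
    have hxm : x = m := key x (by simpa using hx) (List.mem_of_mem_tail hx')
    subst hxm
    have hnd := hqp.support_nodup
    rw [← Walk.cons_tail_support, List.nodup_cons] at hnd
    exact hnd.1 hx'
  obtain ⟨r, hr, hrl⟩ := hT.1.exists_path_of_dist b c
  have heq := (hT.existsUnique_path b c).unique hpath hr
  have hl := congrArg Walk.length heq
  rw [Walk.length_append, Walk.length_reverse] at hl
  unfold Btw8
  rw [T.dist_comm (u := b) (v := m)]
  omega

theorem dist_smul8 {G V : Type*} [Group G] [MulAction G V] {T : SimpleGraph V}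
    (hT : T.IsTree) (hAct : ActsByAut G T) (g : G) (a b : V) :
    T.dist (g • a) (g • b) = T.dist a b := by
  have hle : ∀ (g : G) (a b : V), T.dist (g • a) (g • b) ≤ T.dist a b := by
    intro g a b
    obtain ⟨p, hp⟩ := hT.1.exists_walk_length_eq_dist a b
    let f : T →g T := ⟨fun v => g • v, fun {v w} h => hAct g v w h⟩
    have := T.dist_le (p.map f)
    rw [Walk.length_map, hp] at this
    exact this
  refine le_antisymm (hle g a b) ?_
  simpa using hle g⁻¹ (g • a) (g • b)

/-- Convexity of a set of vertices. -/
def Cvx8 {V : Type*} (T : SimpleGraph V) (C : Set V) : Prop :=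
  ∀ a ∈ C, ∀ b ∈ C, ∀ m, Btw8 T a m b → m ∈ C

theorem cvx8_fixed {G V : Type*} [Group G] [MulAction G V] {T : SimpleGraph V}
    (hT : T.IsTree) (hAct : ActsByAut G T) (g : G) : Cvx8 T (Fixed V g) := by
  intro a ha b hb m hm
  have ha' : g • a = a := ha
  have hb' : g • b = b := hb
  have h1 := dist_smul8 hT hAct g a m
  have h2 := dist_smul8 hT hAct g m b
  rw [ha'] at h1
  rw [hb'] at h2
  refine btw8_unique hT (a := a) (b := b) ?_ hm h1
  unfold Btw8 at *
  omega

theorem helly8 {V ι : Type*} {T : SimpleGraph V} (hT : T.IsTree) (F : ι → Set V)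
    (hF : ∀ i, Cvx8 T (F i)) (S : Finset ι) : ∀ C : Set V, Cvx8 T C → C.Nonempty →
    (∀ i ∈ S, ∀ j ∈ S, ∃ x, x ∈ C ∧ x ∈ F i ∧ x ∈ F j) →
    ∃ x, x ∈ C ∧ ∀ i ∈ S, x ∈ F i := by
  classical
  induction S using Finset.induction_on with
  | empty => intro C _ ⟨x, hx⟩ _; exact ⟨x, hx, by simp⟩
  | insert a S _ ih =>
    intro C hC _ hpair
    have haS := Finset.mem_insert_self a S
    obtain ⟨x, hx, hxF⟩ := ih (C ∩ F a)
      (fun u hu v hv m hm => ⟨hC u hu.1 v hv.1 m hm, hF a u hu.2 v hv.2 m hm⟩)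
      (by obtain ⟨x, hx, hx', _⟩ := hpair a haS a haS; exact ⟨x, hx, hx'⟩)
      (by
        intro i hi j hj
        have hi' := Finset.mem_insert_of_mem (b := a) hi
        have hj' := Finset.mem_insert_of_mem (b := a) hj
        obtain ⟨x, hx, hxa, hxi⟩ := hpair a haS i hi'
        obtain ⟨y, hy, hya, hyj⟩ := hpair a haS j hj'
        obtain ⟨z, hz, hzi, hzj⟩ := hpair i hi' j hj'
        obtain ⟨m, h1, h2, h3⟩ := exists_median8 hT x y z
        exact ⟨m, ⟨hC x hx y hy m h1, hF a x hxa y hya m h1⟩,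
          hF i x hxi z hzi m h2, hF j y hyj z hzj m h3⟩)
    refine ⟨x, hx.1, fun i hi => ?_⟩
    rcases Finset.mem_insert.1 hi with rfl | hi
    · exact hx.2
    · exact hxF i hi

/-- An elliptic element fixes the midpoint of `[v, g v]`. -/
theorem midpoint8 {G V : Type*} [Group G] [MulAction G V] {T : SimpleGraph V}
    (hT : T.IsTree) (hAct : ActsByAut G T) (g : G) (hg : IsElliptic V g) (v w : V)
    (hw : g • v = w) : ∃ m, g • m = m ∧ Btw8 T v m w ∧ T.dist v m = T.dist m w := by
  obtain ⟨p, hp⟩ := hg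
  obtain ⟨m, h1, h2, h3⟩ := exists_median8 hT p v w
  have e1 := dist_smul8 hT hAct g p v
  have e2 := dist_smul8 hT hAct g p m
  have e3 := dist_smul8 hT hAct g m v
  rw [hp] at e1 e2
  rw [hw] at e1 e3
  refine ⟨m, ?_, h3, ?_⟩
  · refine btw8_unique hT (a := p) (b := w) ?_ h2 e2
    unfold Btw8 at *
    omega
  · unfold Btw8 at *
    rw [T.dist_comm (u := v) (v := m)]
    omega

/-- If `G` is generated by a finite set `Σ` and acts without edge
inversions on a simplicial tree with no global fixed vertex, then there is a hyperbolic
element of word length at most `2`: either some `s ∈ Σ` is hyperbolic, or there are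
elliptic `s1, s2 ∈ Σ` with disjoint fixed-point sets, in which case `s1 * s2` is
hyperbolic. -/
theorem statement8 {G V : Type*} [Group G] [MulAction G V] (T : SimpleGraph V)
    (hT : T.IsTree) (hAct : ActsByAut G T) (hNoInv : NoEdgeInversion G T)
    (S : Finset G) (hgen : Subgroup.closure (S : Set G) = ⊤)
    (hnofix : ¬ ∃ v : V, ∀ g : G, g • v = v) :
    (∃ s ∈ S, IsHyperbolic V s) ∨
      (∃ s1 ∈ S, ∃ s2 ∈ S, IsElliptic V s1 ∧ IsElliptic V s2 ∧
        Fixed V s1 ∩ Fixed V s2 = (∅ : Set V) ∧ IsHyperbolic V (s1 * s2)) := by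
  by_cases hhyp : ∃ s ∈ S, IsHyperbolic V s
  · exact Or.inl hhyp
  right
  have hell : ∀ s ∈ S, IsElliptic V s := by
    intro s hs
    by_contra h
    exact hhyp ⟨s, hs, h⟩
  by_cases hpair : ∃ s1 ∈ S, ∃ s2 ∈ S, Fixed V s1 ∩ Fixed V s2 = (∅ : Set V)
  · obtain ⟨s1, hs1, s2, hs2, hdisj⟩ := hpair
    refine ⟨s1, hs1, s2, hs2, hell s1 hs1, hell s2 hs2, hdisj, ?_⟩
    rintro ⟨v, hv⟩
    rw [mul_smul] at hv
    obtain ⟨m, hm, hb, hd⟩ := midpoint8 hT hAct s2 (hell s2 hs2) v (s2 • v) rfl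
    obtain ⟨m', hm', hb', hd'⟩ := midpoint8 hT hAct s1 (hell s1 hs1) (s2 • v) v hv
    have hb'' := btw8_symm hb'
    have hmm : m = m' := by
      refine btw8_unique hT hb hb'' ?_
      unfold Btw8 at *
      rw [T.dist_comm (u := s2 • v) (v := m'), T.dist_comm (u := m') (v := v)] at hd'
      omega
    subst hmm
    have : m ∈ Fixed V s1 ∩ Fixed V s2 := ⟨hm', hm⟩
    rw [hdisj] at this
    exact this
  · exfalso
    apply hnofix
    push Not at hpair
    have hne : Nonempty V := hT.1.nonempty
    obtain ⟨x, -, hx⟩ := helly8 hT (fun s : G => Fixed V s) (cvx8_fixed hT hAct) S Set.univ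
      (fun _ _ _ _ _ _ => Set.mem_univ _) Set.univ_nonempty
      (by
        intro i hi j hj
        obtain ⟨y, hy⟩ := hpair i hi j hj
        exact ⟨y, Set.mem_univ _, hy.1, hy.2⟩)
    refine ⟨x, fun g => ?_⟩
    have hle : Subgroup.closure (S : Set G) ≤ MulAction.stabilizer G x :=
      (Subgroup.closure_le _).2 fun s hs => hx s hs
    rw [hgen] at hle
    exact hle (Subgroup.mem_top g)
end

section
/- Let G be a group generated by a finite set, acting k-acylindrically and without edge inversions on a simplicial tree T for some nonnegative integer k. Assume no vertex of T is fixed by every element of G and that some line of T is invariant under G. Then G is virtually cyclic; more precisely, G contains an infinite cyclic subgroup of index at most 2 (G is isomorphic to ℤ or to the semidirect product ℤ ⋊ ℤ/2ℤ). -/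
open SimpleGraph Pointwise

/-- Isometries of the integers are affine with slope `1` or `-1`. -/
theorem int_isom_aux (e : ℤ → ℤ) (he : ∀ m n, (e m - e n).natAbs = (m - n).natAbs) :
    (∀ n, e n = n + e 0) ∨ (∀ n, e n = -n + e 0) := by
  have h1 := he 1 0
  have h2 : e 1 - e 0 = 1 ∨ e 1 - e 0 = -1 := by omega
  rcases h2 with h2 | h2
  · left
    intro n
    have := he n 0
    have := he n 1
    omega
  · right
    intro n
    have := he n 0
    have := he n 1
    omega

theorem dist_smul_le_aux {G V : Type*} [Group G] [MulAction G V] (T : SimpleGraph V)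
    (hT : T.Connected) (hAct : ActsByAut G T) (g : G) (v w : V) :
    T.dist (g • v) (g • w) ≤ T.dist v w := by
  obtain ⟨p, hp⟩ := hT.exists_walk_length_eq_dist v w
  let φ : T →g T := ⟨fun x => g • x, fun {a b} h => hAct g a b h⟩
  rw [← hp, ← SimpleGraph.Walk.length_map φ p]
  exact SimpleGraph.dist_le (p.map φ)

theorem dist_smul_aux {G V : Type*} [Group G] [MulAction G V] (T : SimpleGraph V)
    (hT : T.Connected) (hAct : ActsByAut G T) (g : G) (v w : V) :
    T.dist (g • v) (g • w) = T.dist v w := by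
  apply le_antisymm (dist_smul_le_aux T hT hAct g v w)
  simpa using dist_smul_le_aux T hT hAct g⁻¹ (g • v) (g • w)

/-- The subgroup of elements translating along `f`. -/
def transSubgroupAux (G : Type*) {V : Type*} [Group G] [MulAction G V] (f : ℤ → V) :
    Subgroup G where
  carrier := {g | ∃ c : ℤ, ∀ n, g • f n = f (n + c)}
  one_mem' := ⟨0, by simp⟩
  mul_mem' := by
    rintro a b ⟨c, hc⟩ ⟨d, hd⟩
    refine ⟨d + c, fun n => ?_⟩
    rw [mul_smul, hd, hc, add_assoc]
  inv_mem' := by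
    rintro a ⟨c, hc⟩
    refine ⟨-c, fun n => ?_⟩
    rw [inv_smul_eq_iff, hc]
    congr 1
    ring

/-- If `G` is finitely generated and acts `k`-acylindrically without edge
inversions on a simplicial tree, with no global fixed vertex but with an invariant line,
then `G` is virtually cyclic: it contains an infinite cyclic subgroup of index at most 2. -/
theorem statement10 {G V : Type*} [Group G] [MulAction G V] (T : SimpleGraph V)
    (hT : T.IsTree) (hAct : ActsByAut G T) (hNoInv : NoEdgeInversion G T)
    (k : ℕ) (hAcyl : AcylindricalAction T G k)
    (S : Finset G) (hgen : Subgroup.closure (S : Set G) = ⊤)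
    (hnofix : ¬ ∃ v : V, ∀ g : G, g • v = v)
    (hline : ∃ L : Set V, IsLine T L ∧ ∀ g : G, g • L = L) :
    ∃ h : G, ¬ IsOfFinOrder h ∧ 0 < (Subgroup.zpowers h).index ∧
      (Subgroup.zpowers h).index ≤ 2 := by
  obtain ⟨L, ⟨f, hf, rfl⟩, hinv⟩ := hline
  have hinj : Function.Injective f := by
    intro m n h
    have := hf m n
    rw [h, SimpleGraph.dist_self] at this
    omega
  -- every element acts as an isometry of the line
  have hact : ∀ g : G, ∃ c : ℤ, (∀ n, g • f n = f (n + c)) ∨ (∀ n, g • f n = f (-n + c)) := by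
    intro g
    have h1 : ∀ n, ∃ m, g • f n = f m := by
      intro n
      have h2 : g • f n ∈ g • Set.range f := Set.smul_mem_smul_set ⟨n, rfl⟩
      rw [hinv g] at h2
      obtain ⟨m, hm⟩ := h2
      exact ⟨m, hm.symm⟩
    choose e he using h1
    have h3 : ∀ m n, (e m - e n).natAbs = (m - n).natAbs := by
      intro m n
      rw [← hf, ← he, ← he, dist_smul_aux T hT.1 hAct, hf]
    refine ⟨e 0, ?_⟩
    rcases int_isom_aux e h3 with h | h
    · left
      intro n
      rw [he, h]
    · right
      intro n
      rw [he, h]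
  -- the action on the line is faithful
  have hfaith : ∀ g : G, (∀ n, g • f n = f n) → g = 1 := by
    intro g hg
    by_contra hne
    have h1 := hAcyl g hne ⟨f 0, hg 0⟩
    have h2 : (T.dist (f 0) (f (k + 1)) : ℕ∞) ≤ setDiam T (Fixed V g) :=
      le_iSup₂_of_le (f 0) (hg 0) (le_iSup₂_of_le (f (k + 1)) (hg _) le_rfl)
    have h3 := h2.trans h1
    rw [hf] at h3
    have h4 : (0 - ((k : ℤ) + 1)).natAbs ≤ k := by exact_mod_cast h3
    omega
  set H := transSubgroupAux G f with hH
  have hmem : ∀ g, g ∈ H ↔ ∃ c : ℤ, ∀ n, g • f n = f (n + c) := fun g => Iff.rfl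
  have hrefl : ∀ g, g ∉ H → ∃ c : ℤ, ∀ n, g • f n = f (-n + c) := by
    intro g hg
    obtain ⟨c, h | h⟩ := hact g
    · exact absurd ⟨c, h⟩ hg
    · exact ⟨c, h⟩
  have hprod : ∀ a b, a ∉ H → b ∉ H → b * a ∈ H := by
    intro a b ha hb
    obtain ⟨c, hc⟩ := hrefl a ha
    obtain ⟨d, hd⟩ := hrefl b hb
    refine ⟨d - c, fun n => ?_⟩
    rw [mul_smul, hc, hd]
    congr 1
    ring
  have hidx : 0 < H.index ∧ H.index ≤ 2 := by
    by_cases htop : H = ⊤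
    · rw [htop]
      simp
    · obtain ⟨a, ha⟩ : ∃ a, a ∉ H := by
        by_contra! hcon
        exact htop ((Subgroup.eq_top_iff' H).2 hcon)
      have : H.index = 2 := by
        rw [Subgroup.index_eq_two_iff]
        refine ⟨a, fun b => ?_⟩
        by_cases hb : b ∈ H
        · right
          exact ⟨hb, fun h => ha ((Subgroup.mul_mem_cancel_left H hb).1 h)⟩
        · left
          exact ⟨hprod a b ha hb, hb⟩
      omega
  have hnt : ∃ t ∈ H, t ≠ 1 := by
    by_contra! hcon
    by_cases htop : ∀ g, g ∈ H
    · exact hnofix ⟨f 0, fun g => by rw [hcon g (htop g), one_smul]⟩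
    · push Not at htop
      obtain ⟨a, ha⟩ := htop
      have haa := hcon _ (hprod a a ha ha)
      have hall : ∀ b, b = 1 ∨ b = a := by
        intro b
        by_cases hb : b ∈ H
        · exact Or.inl (hcon b hb)
        · right
          exact mul_right_cancel ((hcon _ (hprod a b ha hb)).trans haa.symm)
      obtain ⟨c, hc⟩ := hrefl a ha
      rcases Int.even_or_odd' c with ⟨m, hm | hm⟩
      · refine hnofix ⟨f m, fun g => ?_⟩
        rcases hall g with rfl | rfl
        · exact one_smul _ _
        · rw [hc]
          congr 1
          omega
      · refine hNoInv a (f m) (f (m + 1)) ?_ ⟨?_, ?_⟩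
        · rw [← SimpleGraph.dist_eq_one_iff_adj, hf]
          omega
        · rw [hc]
          congr 1
          omega
        · rw [hc]
          congr 1
          omega
  -- translation amount as a homomorphism
  have hex : ∀ g : H, ∃ c : ℤ, ∀ n, (g : G) • f n = f (n + c) := fun g => g.2
  choose τ hτ using hex
  let φ : H →* Multiplicative ℤ := MonoidHom.mk' (fun g => Multiplicative.ofAdd (τ g)) (by
    intro a b
    rw [← ofAdd_add]
    congr 1
    have h1 := hτ (a * b) 0
    rw [Subgroup.coe_mul, mul_smul, hτ, hτ] at h1
    have := hinj h1
    omega)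
  have hφ : Function.Injective φ := by
    rw [injective_iff_map_eq_one]
    intro a ha
    have h0 : τ a = 0 := ha
    apply Subtype.ext
    apply hfaith
    intro n
    rw [hτ, h0, add_zero]
  haveI : IsCyclic H := isCyclic_of_injective φ hφ
  obtain ⟨h, hh⟩ := (Subgroup.isCyclic_iff_exists_zpowers_eq_top H).1 this
  refine ⟨h, ?_, ?_⟩
  · intro hfin
    have hhH : h ∈ H := hh ▸ Subgroup.mem_zpowers h
    obtain ⟨n, hn, hpow⟩ := isOfFinOrder_iff_pow_eq_one.1 hfin
    have h1 : (⟨h, hhH⟩ : H) ^ n = 1 := Subtype.ext hpow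
    have h2 : φ ⟨h, hhH⟩ ^ n = 1 := by rw [← map_pow, h1, map_one]
    have h3 : φ ⟨h, hhH⟩ = 1 := (pow_eq_one_iff_left hn.ne').1 h2
    have h4 : (⟨h, hhH⟩ : H) = 1 := hφ (h3.trans (map_one φ).symm)
    have h5 : h = 1 := congrArg Subtype.val h4
    obtain ⟨t, ht, ht1⟩ := hnt
    rw [← hh, h5, Subgroup.zpowers_one_eq_bot, Subgroup.mem_bot] at ht
    exact ht1 ht
  · rw [hh]
    exact hidx
end

section
/- Let F2 be the free group on two generators x1, x2 and let ℓ1, ℓ2 be positive real numbers. For w ∈ F2 define the weighted word length |w|_ℓ as the minimum, over all finite words in the letters x1^{±1}, x2^{±1} representing w, of the total weight, where each occurrence of x1^{±1} contributes ℓ1 and each occurrence of x2^{±1} contributes ℓ2; let d_ℓ(u,v) = |u^{−1}·v|_ℓ be the associated left-invariant distance. Then the entropy E = Ent(F2, d_ℓ) is a finite positive real number and satisfies the equation (e^{E·ℓ1} − 1)·(e^{E·ℓ2} − 1) = 4. -/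
/-- The weight of a word (a list of letters `x1^{±1}, x2^{±1}`, encoded as
`List (Bool × Bool)` where the first component selects the generator — `true` for `x1`,
`false` for `x2`): each occurrence of `x1^{±1}` contributes `ℓ1` and each occurrence of
`x2^{±1}` contributes `ℓ2`. -/
noncomputable def wordWeight (ℓ1 ℓ2 : ℝ) (L : List (Bool × Bool)) : ℝ :=
  (L.map (fun p => if p.1 then ℓ1 else ℓ2)).sum

/-- The weighted word length of `w` in the free group on two generators: the infimum
(minimum) of the total weight over all words representing `w`. -/
noncomputable def weightedLength (ℓ1 ℓ2 : ℝ) (w : FreeGroup Bool) : ℝ :=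
  sInf {t : ℝ | ∃ L : List (Bool × Bool), FreeGroup.mk L = w ∧ t = wordWeight ℓ1 ℓ2 L}

/-- The entropy of the free group on two generators with respect to the left-invariant
distance `d_ℓ(u,v) = |u⁻¹v|_ℓ`: the exponential growth rate of the cardinality of balls
around the identity. -/
noncomputable def weightedEntropy (ℓ1 ℓ2 : ℝ) : ℝ :=
  Filter.limsup
    (fun R : ℝ => R⁻¹ * Real.log (Nat.card {w : FreeGroup Bool | weightedLength ℓ1 ℓ2 w ≤ R}))
    Filter.atTop

/-- weight of a letter -/
noncomputable def letW (ℓ1 ℓ2 : ℝ) (b : Bool) : ℝ := if b then ℓ1 else ℓ2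

/-- reduced words that may follow the letter `p`, with weight at most `R` -/
def folW (ℓ1 ℓ2 : ℝ) (p : Bool × Bool) (R : ℝ) : Set (List (Bool × Bool)) :=
  {L | FreeGroup.IsReduced (p :: L) ∧ wordWeight ℓ1 ℓ2 L ≤ R}

lemma wordWeight_cons' (ℓ1 ℓ2 : ℝ) (q : Bool × Bool) (L : List (Bool × Bool)) :
    wordWeight ℓ1 ℓ2 (q :: L) = letW ℓ1 ℓ2 q.1 + wordWeight ℓ1 ℓ2 L := by
  simp [wordWeight, letW]

lemma wordWeight_nonneg' {ℓ1 ℓ2 : ℝ} (h1 : 0 < ℓ1) (h2 : 0 < ℓ2) (L : List (Bool × Bool)) :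
    0 ≤ wordWeight ℓ1 ℓ2 L := by
  apply List.sum_nonneg
  intro x hx
  simp only [List.mem_map] at hx
  obtain ⟨p, -, rfl⟩ := hx
  split_ifs <;> linarith

lemma weightedLength_eq' {ℓ1 ℓ2 : ℝ} (h1 : 0 < ℓ1) (h2 : 0 < ℓ2) (w : FreeGroup Bool) :
    weightedLength ℓ1 ℓ2 w = wordWeight ℓ1 ℓ2 w.toWord := by
  apply IsLeast.csInf_eq
  refine ⟨⟨w.toWord, FreeGroup.mk_toWord, rfl⟩, ?_⟩
  rintro t ⟨L, rfl, rfl⟩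
  have hs : (FreeGroup.mk L).toWord.Sublist L := by
    rw [FreeGroup.toWord_mk]
    exact (FreeGroup.reduce.red (L := L)).sublist
  apply List.Sublist.sum_le_sum (hs.map _)
  intro x hx
  simp only [List.mem_map] at hx
  obtain ⟨p, -, rfl⟩ := hx
  split_ifs <;> linarith

lemma folW_count {ℓ1 ℓ2 : ℝ} (h1 : 0 < ℓ1) (h2 : 0 < ℓ2) {E k K M m : ℝ} {U : Bool → ℝ}
    (hm1 : m ≤ ℓ1) (hm2 : m ≤ ℓ2) (hM1 : ℓ1 ≤ M) (hM2 : ℓ2 ≤ M)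
    (hE : 0 ≤ E) (hk : 0 ≤ k) (hK : 0 ≤ K) (hU : ∀ b, 0 ≤ U b)
    (hU' : ∀ b, U b = Real.exp (-(E * letW ℓ1 ℓ2 b)) * U b
      + 2 * (Real.exp (-(E * letW ℓ1 ℓ2 (!b))) * U (!b)))
    (hkU : ∀ b, k * U b ≤ 1 / 2)
    (hKU : ∀ b, 1 / 2 ≤ K * U b * Real.exp (-(E * M))) (n : ℕ) :
    ∀ R : ℝ, R < n * m → ∀ p : Bool × Bool, ∃ F : Finset (List (Bool × Bool)),
      (∀ L, L ∈ F ↔ L ∈ folW ℓ1 ℓ2 p R) ∧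
      k * U p.1 * Real.exp (E * R) - 1 / 2 ≤ F.card ∧
      (-M ≤ R → (F.card : ℝ) ≤ K * U p.1 * Real.exp (E * R) - 1 / 2) := by
  have base : ∀ R : ℝ, R < 0 → ∀ p : Bool × Bool, ∃ F : Finset (List (Bool × Bool)),
      (∀ L, L ∈ F ↔ L ∈ folW ℓ1 ℓ2 p R) ∧
      k * U p.1 * Real.exp (E * R) - 1 / 2 ≤ F.card ∧
      (-M ≤ R → (F.card : ℝ) ≤ K * U p.1 * Real.exp (E * R) - 1 / 2) := by
    intro R hR p
    refine ⟨∅, ?_, ?_, ?_⟩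
    · intro L
      have := wordWeight_nonneg' h1 h2 L
      simp only [Finset.notMem_empty, folW, Set.mem_ofPred_eq, false_iff, not_and, not_le]
      intro _
      linarith
    · have h : Real.exp (E * R) ≤ 1 := Real.exp_le_one_iff.2 (by nlinarith)
      have h' := hkU p.1
      have h'' : 0 ≤ k * U p.1 := mul_nonneg hk (hU _)
      have := mul_le_of_le_one_right h'' h
      simp only [Finset.card_empty, Nat.cast_zero]
      linarith
    · intro hMR
      have h : Real.exp (-(E * M)) ≤ Real.exp (E * R) := Real.exp_le_exp.2 (by nlinarith)
      have h' := hKU p.1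
      have h'' : 0 ≤ K * U p.1 := mul_nonneg hK (hU _)
      have := mul_le_mul_of_nonneg_left h h''
      simp only [Finset.card_empty, Nat.cast_zero]
      linarith
  induction n with
  | zero =>
    intro R hR p
    exact base R (by simpa using hR) p
  | succ n ih =>
    intro R hR p
    rcases lt_or_ge R 0 with h0 | h0
    · exact base R h0 p
    have hlm : ∀ b, m ≤ letW ℓ1 ℓ2 b := by intro b; cases b <;> simp [letW, *]
    have hlM : ∀ b, letW ℓ1 ℓ2 b ≤ M := by intro b; cases b <;> simp [letW, *]
    have ih' : ∀ q : Bool × Bool, ∃ F : Finset (List (Bool × Bool)),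
      (∀ L, L ∈ F ↔ L ∈ folW ℓ1 ℓ2 q (R - letW ℓ1 ℓ2 q.1)) ∧
      k * U q.1 * Real.exp (E * (R - letW ℓ1 ℓ2 q.1)) - 1 / 2 ≤ F.card ∧
      (-M ≤ (R - letW ℓ1 ℓ2 q.1) →
        (F.card : ℝ) ≤ K * U q.1 * Real.exp (E * (R - letW ℓ1 ℓ2 q.1)) - 1 / 2) := by
      intro q
      apply ih
      have := hlm q.1
      push_cast at hR
      linarith
    choose F hF hFl hFu using ih'
    have hsum : ∀ g : Bool → ℝ, ∑ q : Bool × Bool with (p.1 = q.1 → p.2 = q.2), g q.1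
        = g p.1 + 2 * g (!p.1) := by
      intro g
      obtain ⟨p1, p2⟩ := p
      rw [Finset.sum_filter, Fintype.sum_prod_type]
      cases p1 <;> cases p2 <;> simp <;> ring
    let G : Finset (List (Bool × Bool)) := insert [] ((Finset.univ.filter
      (fun q : Bool × Bool => p.1 = q.1 → p.2 = q.2)).biUnion
        (fun q => (F q).image (List.cons q)))
    have hcard : (G.card : ℝ)
        = 1 + ∑ q : Bool × Bool with (p.1 = q.1 → p.2 = q.2), ((F q).card : ℝ) := by
      rw [Finset.card_insert_of_notMem (by simp), Finset.card_biUnion]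
      · push_cast
        rw [add_comm]
        congr 1
        apply Finset.sum_congr rfl
        intro q _
        rw [Finset.card_image_of_injective _ (List.cons_injective)]
      · intro x _ y _ hxy
        rw [Function.onFun, Finset.disjoint_left]
        intro L hL hL'
        simp only [Finset.mem_image] at hL hL'
        obtain ⟨a, _, rfl⟩ := hL
        obtain ⟨b, _, hb⟩ := hL'
        simp only [List.cons.injEq] at hb
        exact hxy hb.1.symm
    have hexp : ∀ b, Real.exp (E * (R - letW ℓ1 ℓ2 b))
        = Real.exp (E * R) * Real.exp (-(E * letW ℓ1 ℓ2 b)) := by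
      intro b
      rw [← Real.exp_add]
      ring_nf
    have hmain : ∀ c : ℝ, ∑ q : Bool × Bool with (p.1 = q.1 → p.2 = q.2),
        (c * U q.1 * Real.exp (E * (R - letW ℓ1 ℓ2 q.1)) - 1 / 2)
        = c * U p.1 * Real.exp (E * R) - 3 / 2 := by
      intro c
      rw [hsum (fun b => c * U b * Real.exp (E * (R - letW ℓ1 ℓ2 b)) - 1 / 2), hexp, hexp]
      linear_combination (- c * Real.exp (E * R)) * hU' p.1
    refine ⟨G, ?_, ?_, ?_⟩
    · intro L
      cases L with
      | nil => simp [G, folW, FreeGroup.IsReduced, wordWeight, h0]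
      | cons q L =>
        simp only [G, Finset.mem_insert, reduceCtorEq, Finset.mem_biUnion, Finset.mem_filter,
          Finset.mem_univ, true_and, Finset.mem_image, false_or, hF, folW, Set.mem_ofPred_eq,
          wordWeight_cons', List.cons.injEq, FreeGroup.IsReduced, List.isChain_cons_cons]
        constructor
        · rintro ⟨q', hq', L', ⟨hL', hw⟩, rfl, rfl⟩
          exact ⟨⟨hq', hL'⟩, by linarith⟩
        · rintro ⟨⟨hq, hL⟩, hw⟩
          exact ⟨q, hq, L, ⟨hL, by linarith⟩, rfl, rfl⟩
    · rw [hcard]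
      have := Finset.sum_le_sum (s := Finset.univ.filter
        (fun q : Bool × Bool => p.1 = q.1 → p.2 = q.2)) (fun q _ => hFl q)
      rw [hmain] at this
      linarith
    · intro _
      rw [hcard]
      have := Finset.sum_le_sum (s := Finset.univ.filter
        (fun q : Bool × Bool => p.1 = q.1 → p.2 = q.2))
        (fun q _ => hFu q (by have := hlM q.1; linarith))
      rw [hmain] at this
      linarith

lemma exists_root' {ℓ1 ℓ2 : ℝ} (h1 : 0 < ℓ1) (h2 : 0 < ℓ2) :
    ∃ E : ℝ, 0 < E ∧ (Real.exp (E * ℓ1) - 1) * (Real.exp (E * ℓ2) - 1) = 4 := by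
  have hT : (0 : ℝ) ≤ 2 / ℓ1 + 2 / ℓ2 := by positivity
  have hc : ContinuousOn (fun E : ℝ => (Real.exp (E * ℓ1) - 1) * (Real.exp (E * ℓ2) - 1))
      (Set.Icc 0 (2 / ℓ1 + 2 / ℓ2)) := by fun_prop
  have hmem : (4 : ℝ) ∈ Set.Icc
      ((fun E : ℝ => (Real.exp (E * ℓ1) - 1) * (Real.exp (E * ℓ2) - 1)) 0)
      ((fun E : ℝ => (Real.exp (E * ℓ1) - 1) * (Real.exp (E * ℓ2) - 1)) (2 / ℓ1 + 2 / ℓ2)) := by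
    constructor
    · simp
    · have e1 : 2 ≤ (2 / ℓ1 + 2 / ℓ2) * ℓ1 := by
        have : (2 / ℓ1 + 2 / ℓ2) * ℓ1 = 2 + 2 / ℓ2 * ℓ1 := by field_simp
        have h' : 0 < 2 / ℓ2 * ℓ1 := by positivity
        linarith
      have e2 : 2 ≤ (2 / ℓ1 + 2 / ℓ2) * ℓ2 := by
        have : (2 / ℓ1 + 2 / ℓ2) * ℓ2 = 2 + 2 / ℓ1 * ℓ2 := by field_simp; ring
        have h' : 0 < 2 / ℓ1 * ℓ2 := by positivity
        linarith
      have f1 := Real.add_one_le_exp ((2 / ℓ1 + 2 / ℓ2) * ℓ1)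
      have f2 := Real.add_one_le_exp ((2 / ℓ1 + 2 / ℓ2) * ℓ2)
      show (4 : ℝ) ≤ _ * _
      nlinarith
  obtain ⟨E, hE, hE4⟩ := intermediate_value_Icc hT hc hmem
  refine ⟨E, lt_of_le_of_ne hE.1 ?_, hE4⟩
  rintro rfl
  simp at hE4

lemma ball_bounds {ℓ1 ℓ2 : ℝ} (h1 : 0 < ℓ1) (h2 : 0 < ℓ2) {E : ℝ} (hE : 0 < E)
    (hroot : (Real.exp (E * ℓ1) - 1) * (Real.exp (E * ℓ2) - 1) = 4) :
    ∃ c C : ℝ, 0 < c ∧ 0 < C ∧ ∀ R : ℝ, 0 ≤ R →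
      c * Real.exp (E * R) ≤ Nat.card {w : FreeGroup Bool | weightedLength ℓ1 ℓ2 w ≤ R} ∧
      (Nat.card {w : FreeGroup Bool | weightedLength ℓ1 ℓ2 w ≤ R} : ℝ) ≤ C * Real.exp (E * R) := by
  set a := Real.exp (-(E * ℓ1)) with ha
  set b := Real.exp (-(E * ℓ2)) with hb
  have ha0 : 0 < a := Real.exp_pos _
  have hb0 : 0 < b := Real.exp_pos _
  have ha1 : a < 1 := by rw [ha, Real.exp_lt_one_iff]; nlinarith
  have hab : (1 - a) * (1 - b) = 4 * a * b := by
    have e1 : a * Real.exp (E * ℓ1) = 1 := by rw [ha, ← Real.exp_add]; simp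
    have e2 : b * Real.exp (E * ℓ2) = 1 := by rw [hb, ← Real.exp_add]; simp
    rw [show 1 - a = a * (Real.exp (E * ℓ1) - 1) by linarith,
      show 1 - b = b * (Real.exp (E * ℓ2) - 1) by linarith]
    linear_combination a * b * hroot
  let U : Bool → ℝ := fun x => if x then 2 * b else 1 - a
  have hUpos : ∀ x, 0 < U x := by
    intro x
    cases x <;> simp [U] <;> linarith
  have hU' : ∀ x, U x = Real.exp (-(E * letW ℓ1 ℓ2 x)) * U x
      + 2 * (Real.exp (-(E * letW ℓ1 ℓ2 (!x))) * U (!x)) := by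
    intro x
    cases x <;> simp [U, letW, ← ha, ← hb] <;> linarith
  set M := max ℓ1 ℓ2 with hM
  set m := min ℓ1 ℓ2 with hm
  have hm0 : 0 < m := lt_min h1 h2
  have hu := hUpos true
  have hv := hUpos false
  set k := 1 / (2 * (U true + U false)) with hk
  have hk0 : 0 < k := by positivity
  set K := (1 / U true + 1 / U false) * Real.exp (E * M) with hK
  have hK0 : 0 < K := by positivity
  have hkU : ∀ x, k * U x ≤ 1 / 2 := by
    intro x
    rw [hk, div_mul_eq_mul_div, div_le_div_iff₀ (by positivity) (by norm_num)]
    cases x <;> linarith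
  have hKU : ∀ x, 1 / 2 ≤ K * U x * Real.exp (-(E * M)) := by
    intro x
    have e : Real.exp (E * M) * Real.exp (-(E * M)) = 1 := by rw [← Real.exp_add]; simp
    have : K * U x * Real.exp (-(E * M)) = (1 / U true + 1 / U false) * U x := by
      rw [hK]; linear_combination ((1 / U true + 1 / U false) * U x) * e
    rw [this]
    cases x
    · have h3 : 1 / U false * U false = 1 := by field_simp
      have h4 : 0 < 1 / U true * U false := by positivity
      linarith
    · have h3 : 1 / U true * U true = 1 := by field_simp
      have h4 : 0 < 1 / U false * U true := by positivity
      linarith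
  refine ⟨k * U true / 2, ∑ q : Bool × Bool, K * U q.1, by positivity, ?_, ?_⟩
  · exact Finset.sum_pos (fun q _ => mul_pos hK0 (hUpos _)) Finset.univ_nonempty
  intro R hR
  have hM0 : 0 < M := lt_max_of_lt_left h1
  obtain ⟨n, hn⟩ := exists_nat_gt (R / m)
  have hn' : R < n * m := by rwa [div_lt_iff₀ hm0] at hn
  have key := folW_count h1 h2 (min_le_left _ _) (min_le_right _ _) (le_max_left _ _)
    (le_max_right _ _) hE.le hk0.le hK0.le (fun x => (hUpos x).le) hU' hkU hKU n R hn'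
  choose F hF hFl hFu using key
  let B : Finset (List (Bool × Bool)) := Finset.univ.biUnion F
  have hBmem : ∀ L, L ∈ B ↔ FreeGroup.IsReduced L ∧ wordWeight ℓ1 ℓ2 L ≤ R := by
    intro L
    simp only [B, Finset.mem_biUnion, Finset.mem_univ, true_and, hF, folW, Set.mem_ofPred_eq]
    constructor
    · rintro ⟨q, hq, hw⟩
      exact ⟨List.IsChain.tail hq, hw⟩
    · rintro ⟨hL, hw⟩
      cases L with
      | nil => exact ⟨(true, true), by simp [FreeGroup.IsReduced], hw⟩
      | cons q L =>
        refine ⟨q, ?_, hw⟩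
        rw [FreeGroup.IsReduced, List.isChain_cons_cons]
        exact ⟨fun _ => rfl, hL⟩
  have hcard : Nat.card {w : FreeGroup Bool | weightedLength ℓ1 ℓ2 w ≤ R} = B.card := by
    have himg : FreeGroup.toWord '' {w : FreeGroup Bool | weightedLength ℓ1 ℓ2 w ≤ R}
        = (B : Set (List (Bool × Bool))) := by
      ext L
      simp only [Set.mem_image, Set.mem_ofPred_eq, Finset.mem_coe, hBmem, weightedLength_eq' h1 h2]
      constructor
      · rintro ⟨w, hw, rfl⟩
        exact ⟨FreeGroup.isReduced_toWord, hw⟩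
      · rintro ⟨hL, hw⟩
        have : (FreeGroup.mk L).toWord = L := by
          rw [FreeGroup.toWord_mk]
          exact hL.reduce_eq
        exact ⟨FreeGroup.mk L, by rwa [this], this⟩
    rw [← Nat.card_image_of_injective FreeGroup.toWord_injective, himg]
    simp
  rw [hcard]
  constructor
  · have hsub : F (true, true) ⊆ B := Finset.subset_biUnion_of_mem F (Finset.mem_univ _)
    have hle : ((F (true, true)).card : ℝ) ≤ B.card := by exact_mod_cast Finset.card_le_card hsub
    have hone : (1 : ℝ) ≤ B.card := by
      have : 0 < B.card := Finset.card_pos.2 ⟨[], (hBmem []).2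
        ⟨by simp [FreeGroup.IsReduced], by simpa [wordWeight] using hR⟩⟩
      exact_mod_cast this
    have := hFl (true, true)
    simp only at this
    linarith
  · have hle : (B.card : ℝ) ≤ ∑ q, ((F q).card : ℝ) := by
      exact_mod_cast Finset.card_biUnion_le
    refine hle.trans ?_
    rw [Finset.sum_mul]
    apply Finset.sum_le_sum
    intro q _
    have := hFu q (by linarith)
    linarith

lemma weightedEntropy_eq' {ℓ1 ℓ2 : ℝ} (h1 : 0 < ℓ1) (h2 : 0 < ℓ2) {E : ℝ} (hE : 0 < E)
    (hroot : (Real.exp (E * ℓ1) - 1) * (Real.exp (E * ℓ2) - 1) = 4) :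
    weightedEntropy ℓ1 ℓ2 = E := by
  obtain ⟨c, C, hc, hC, hb⟩ := ball_bounds h1 h2 hE hroot
  apply Filter.Tendsto.limsup_eq
  have lim : ∀ x : ℝ, Filter.Tendsto (fun R : ℝ => R⁻¹ * x + E) Filter.atTop (nhds E) := by
    intro x
    have := (tendsto_inv_atTop_zero (𝕜 := ℝ)).mul_const x |>.add_const E
    simpa using this
  have hlog : ∀ x : ℝ, 0 < x → ∀ R : ℝ, 0 < R →
      R⁻¹ * Real.log (x * Real.exp (E * R)) = R⁻¹ * Real.log x + E := by
    intro x hx R hR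
    rw [Real.log_mul hx.ne' (Real.exp_pos _).ne', Real.log_exp]
    field_simp
  refine tendsto_of_tendsto_of_tendsto_of_le_of_le' (lim (Real.log c)) (lim (Real.log C)) ?_ ?_
  · filter_upwards [Filter.eventually_gt_atTop 0] with R hR
    rw [← hlog c hc R hR]
    exact mul_le_mul_of_nonneg_left (Real.log_le_log (by positivity) (hb R hR.le).1)
      (by positivity)
  · filter_upwards [Filter.eventually_gt_atTop 0] with R hR
    rw [← hlog C hC R hR]
    exact mul_le_mul_of_nonneg_left (Real.log_le_log
      (lt_of_lt_of_le (by positivity) (hb R hR.le).1) (hb R hR.le).2)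
      (by positivity)

/-- For positive weights `ℓ1, ℓ2` on the two generators of the free group
`F₂`, the entropy `E` of `F₂` with the weighted word distance is a (finite) positive real
number and satisfies `(e^{E·ℓ1} − 1)·(e^{E·ℓ2} − 1) = 4`. -/
theorem statement11 (ℓ1 ℓ2 : ℝ) (hℓ1 : 0 < ℓ1) (hℓ2 : 0 < ℓ2) :
    0 < weightedEntropy ℓ1 ℓ2 ∧
      (Real.exp (weightedEntropy ℓ1 ℓ2 * ℓ1) - 1) *
        (Real.exp (weightedEntropy ℓ1 ℓ2 * ℓ2) - 1) = 4 := by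
  obtain ⟨E, hE, hroot⟩ := exists_root' hℓ1 hℓ2
  rw [weightedEntropy_eq' hℓ1 hℓ2 hE hroot]
  exact ⟨hE, hroot⟩
end

section
/- Let G be a group acting k-acylindrically and without edge inversions on a simplicial tree T, where k is a nonnegative integer, and let h1, h2 ∈ G be hyperbolic elements such that the intersection J = Axis(h1) ∩ Axis(h2) has finite diameter d with d ≥ 3k+1. Then max{τ(h1), τ(h2)} > d/3. -/
open SimpleGraph Pointwise

section Helpers

variable {V : Type*} {T : SimpleGraph V}

lemma tree_step (hT : T.IsTree) {x y : V} {n : ℕ} (h : T.dist x y = n + 1) :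
    ∃ x', T.Adj x x' ∧ T.dist x' y = n := by
  obtain ⟨p, hp⟩ := hT.connected.exists_walk_length_eq_dist x y
  cases p with
  | nil => simp at h
  | cons hadj q =>
    rename_i x'
    refine ⟨x', hadj, ?_⟩
    have h1 := T.dist_le q
    have h2 := hT.dist_eq_dist_add_one_of_adj y hadj
    rw [T.dist_comm (u := y), T.dist_comm (u := y)] at h2
    simp only [Walk.length_cons] at hp
    omega

lemma tree_closer_unique (hT : T.IsTree) {a b c z : V} (hb : T.Adj a b) (hc : T.Adj a c)
    (hbz : T.dist b z + 1 = T.dist a z) (hcz : T.dist c z + 1 = T.dist a z) : b = c := by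
  obtain ⟨p, hp⟩ := hT.connected.exists_walk_length_eq_dist b z
  obtain ⟨q, hq⟩ := hT.connected.exists_walk_length_eq_dist c z
  have h1 : (Walk.cons hb p).IsPath :=
    Walk.isPath_of_length_eq_dist _ (by simp only [Walk.length_cons]; omega)
  have h2 : (Walk.cons hc q).IsPath :=
    Walk.isPath_of_length_eq_dist _ (by simp only [Walk.length_cons]; omega)
  have h3 := (hT.existsUnique_path a z).unique h1 h2
  have h4 := congrArg Walk.snd h3
  simpa using h4

lemma tree_straight (hT : T.IsTree) (z : V) (n : ℕ) : ∀ (x w w' : V), T.Adj w w' →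
    T.dist w' x = n → T.dist w x = n + 1 → T.dist w' z = T.dist w z + 1 →
    T.dist x z = T.dist w x + T.dist w z := by
  induction n with
  | zero =>
    intro x w w' hadj h1 h2 h3
    have : w' = x := (hT.connected.dist_eq_zero_iff).1 h1
    subst this
    omega
  | succ n ih =>
    intro x w w' hadj h1 h2 h3
    obtain ⟨w2, hadj2, hw2⟩ := tree_step hT h1
    have h4 := hT.dist_eq_dist_add_one_of_adj z hadj2
    rw [T.dist_comm (u := z), T.dist_comm (u := z)] at h4
    rcases h4 with h4 | h4
    · have : w = w2 := tree_closer_unique hT hadj.symm hadj2 h3.symm h4.symm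
      subst this
      omega
    · have := ih x w' w2 hadj2 hw2 h1 h4
      omega

lemma tree_four (hT : T.IsTree) (x y z : V) (n : ℕ) : ∀ w : V, T.dist w x = n →
    T.dist x y + T.dist w z ≤ max (T.dist x z + T.dist w y) (T.dist w x + T.dist y z) := by
  induction n with
  | zero =>
    intro w h
    have : w = x := (hT.connected.dist_eq_zero_iff).1 h
    subst this
    omega
  | succ n ih =>
    intro w h
    obtain ⟨w', hadj, hw⟩ := tree_step hT h
    have hy := hT.dist_eq_dist_add_one_of_adj y hadj
    rw [T.dist_comm (u := y), T.dist_comm (u := y)] at hy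
    have hz := hT.dist_eq_dist_add_one_of_adj z hadj
    rw [T.dist_comm (u := z), T.dist_comm (u := z)] at hz
    have hi := ih w' hw
    have t1 := hT.connected.dist_triangle (u := x) (v := w) (w := y)
    have e1 := T.dist_comm (u := x) (v := w)
    have e2 := T.dist_comm (u := y) (v := z)
    rcases hy with hy | hy <;> rcases hz with hz | hz
    · omega
    · have s1 := tree_straight hT z _ x w w' hadj hw h hz
      omega
    · have s1 := tree_straight hT y _ x w w' hadj hw h hy
      have s2 := tree_straight hT y _ z w w' hadj rfl hz hy
      omega
    · have s1 := tree_straight hT y _ x w w' hadj hw h hy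
      have s2 := tree_straight hT z _ x w w' hadj hw h hz
      omega

lemma tree_interp (hT : T.IsTree) (y : V) (t : ℕ) : ∀ x : V, t ≤ T.dist x y →
    ∃ p, T.dist x p = t ∧ t + T.dist p y = T.dist x y := by
  induction t with
  | zero => intro x _; exact ⟨x, by simp, by simp⟩
  | succ t ih =>
    intro x h
    obtain ⟨x', hadj, hx'⟩ := tree_step hT (x := x) (y := y) (n := T.dist x y - 1) (by omega)
    obtain ⟨p, hp1, hp2⟩ := ih x' (by omega)
    have t1 := hT.connected.dist_triangle (u := x) (v := x') (w := p)
    have t2 := hT.connected.dist_triangle (u := x) (v := p) (w := y)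
    have := T.dist_eq_one_iff_adj.2 hadj
    exact ⟨p, by omega, by omega⟩

/-- Uniqueness of points on geodesics. -/
lemma tree_uniq (hT : T.IsTree) {x y a b : V} (hab : T.dist x a = T.dist x b)
    (ha : T.dist x a + T.dist a y = T.dist x y) (hb : T.dist x b + T.dist b y = T.dist x y) :
    a = b := by
  have h4 := tree_four hT a b y _ x rfl
  have e1 := T.dist_comm (u := y) (v := a)
  have e2 := T.dist_comm (u := y) (v := b)
  exact (hT.connected.dist_eq_zero_iff).1 (by omega)

variable {G : Type*} [Group G] [MulAction G V]

lemma tree_dist_smul (hT : T.IsTree) (hAct : ActsByAut G T) (g : G) (v w : V) :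
    T.dist (g • v) (g • w) = T.dist v w := by
  have key : ∀ (g : G) (v w : V), T.dist (g • v) (g • w) ≤ T.dist v w := by
    intro g v w
    obtain ⟨p, hp⟩ := hT.connected.exists_walk_length_eq_dist v w
    let f : T →g T := ⟨fun u => g • u, fun {a b} h => hAct g a b h⟩
    have := T.dist_le (p.map f)
    rw [Walk.length_map, hp] at this
    exact this
  apply le_antisymm (key g v w)
  simpa using key g⁻¹ (g • v) (g • w)

lemma transLen_le (T : SimpleGraph V) (g : G) (v : V) : transLen T g ≤ T.dist v (g • v) :=
  Nat.sInf_le ⟨v, rfl⟩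

lemma tree_dist_inv (hT : T.IsTree) (hAct : ActsByAut G T) (g : G) (v : V) :
    T.dist v (g⁻¹ • v) = T.dist v (g • v) := by
  rw [← tree_dist_smul hT hAct g v (g⁻¹ • v), smul_inv_smul, T.dist_comm]

lemma transLen_inv (hT : T.IsTree) (hAct : ActsByAut G T) (g : G) :
    transLen T g⁻¹ = transLen T g := by
  unfold transLen
  simp_rw [tree_dist_inv hT hAct]

lemma Axis_inv (hT : T.IsTree) (hAct : ActsByAut G T) (g : G) :
    Axis T g⁻¹ = Axis T g := by
  unfold Axis
  simp_rw [tree_dist_inv hT hAct, transLen_inv hT hAct]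

lemma IsHyperbolic.inv' {g : G} (h : IsHyperbolic V g) : IsHyperbolic V g⁻¹ := by
  rintro ⟨v, hv⟩
  exact h ⟨v, by rw [inv_smul_eq_iff] at hv; exact hv.symm⟩

lemma axis_pos (hT : T.IsTree) {h : G} (hh : IsHyperbolic V h) {v : V} (hv : v ∈ Axis T h) :
    1 ≤ transLen T h := by
  have hv' : T.dist v (h • v) = transLen T h := hv
  by_contra hc
  exact hh ⟨v, ((hT.connected.dist_eq_zero_iff).1 (by omega)).symm⟩

lemma axis_two (hT : T.IsTree) (hAct : ActsByAut G T) (hNoInv : NoEdgeInversion G T) {h : G}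
    (hh : IsHyperbolic V h) {v : V} (hv : v ∈ Axis T h) :
    T.dist v (h • h • v) = 2 * transLen T h := by
  have hpos := axis_pos hT hh hv
  have hv' : T.dist v (h • v) = transLen T h := hv
  have hv2 : T.dist (h • v) (h • h • v) = transLen T h := by rw [tree_dist_smul hT hAct, hv']
  by_contra hc
  obtain ⟨q, hq, hqd⟩ := tree_step hT (x := v) (y := h • v) (n := transLen T h - 1) (by omega)
  have hhq : T.Adj (h • v) (h • q) := hAct h _ _ hq
  have hhqd : T.dist (h • q) (h • h • v) = transLen T h - 1 := by rw [tree_dist_smul hT hAct, hqd]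
  have key : ∀ p, T.Adj (h • v) p → T.dist p v + 1 = transLen T h → p = h • q := by
    intro p hp hpd
    have h4 := hT.dist_eq_dist_add_one_of_adj (h • h • v) hp
    rw [T.dist_comm (u := h • h • v), T.dist_comm (u := h • h • v)] at h4
    have e := T.dist_comm (u := v) (v := h • v)
    rcases h4 with h4 | h4
    · exact tree_closer_unique hT hp hhq h4.symm (by omega)
    · have := tree_straight hT (h • h • v) _ v (h • v) p hp rfl (by omega) h4
      omega
  have hmin := transLen_le T h q
  by_cases h1 : transLen T h = 1
  · have hqv : q = h • v := (hT.connected.dist_eq_zero_iff).1 (by omega)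
    have hk := key v (T.dist_eq_one_iff_adj.1 (by rw [T.dist_comm]; omega)) (by simp; omega)
    rw [hqv] at hk hq
    exact hNoInv h v (h • v) hq ⟨rfl, hk.symm⟩
  · have e := T.dist_comm (u := h • v) (v := q)
    obtain ⟨p, hp, hpd⟩ := tree_step hT (x := h • v) (y := q) (n := transLen T h - 2) (by omega)
    have t1 := hT.connected.dist_triangle (u := p) (v := q) (w := v)
    have t2 := hT.connected.dist_triangle (u := v) (v := p) (w := h • v)
    have e1 := T.dist_comm (u := v) (v := p)
    have e2 := T.dist_comm (u := h • v) (v := p)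
    have e3 := T.dist_comm (u := v) (v := q)
    have e4 := T.dist_comm (u := p) (v := q)
    have a1 := T.dist_eq_one_iff_adj.2 hp
    have a2 := T.dist_eq_one_iff_adj.2 hq
    have := key p hp (by omega)
    rw [← this] at hmin
    omega

lemma axis_pow (hT : T.IsTree) (hAct : ActsByAut G T) (hNoInv : NoEdgeInversion G T) {h : G}
    (hh : IsHyperbolic V h) {v : V} (hv : v ∈ Axis T h) (n : ℕ) :
    n * transLen T h ≤ T.dist v (h ^ n • v) ∧
      T.dist v (h ^ n • v) + transLen T h ≤ T.dist v (h ^ (n + 1) • v) := by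
  have hv' : T.dist v (h • v) = transLen T h := hv
  have hpos := axis_pos hT hh hv
  induction n with
  | zero => simp [hv']
  | succ n ih =>
    obtain ⟨i1, i2⟩ := ih
    refine ⟨by rw [add_mul]; omega, ?_⟩
    have s1 : T.dist (h ^ n • v) (h ^ (n + 1) • v) = transLen T h := by
      rw [pow_succ, mul_smul, tree_dist_smul hT hAct, hv']
    have s2 : T.dist (h ^ (n + 1) • v) (h ^ (n + 1 + 1) • v) = transLen T h := by
      rw [pow_succ h (n + 1), mul_smul, tree_dist_smul hT hAct, hv']
    have s3 : T.dist (h ^ n • v) (h ^ (n + 1 + 1) • v) = 2 * transLen T h := by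
      rw [pow_succ, pow_succ, mul_smul, mul_smul, tree_dist_smul hT hAct,
        axis_two hT hAct hNoInv hh hv]
    have f := tree_four hT (h ^ n • v) (h ^ (n + 1 + 1) • v) (h ^ (n + 1) • v) _ v rfl
    have e := T.dist_comm (u := h ^ (n + 1) • v) (v := h ^ (n + 1 + 1) • v)
    omega

lemma tree_orient (hT : T.IsTree) (hAct : ActsByAut G T) (hNoInv : NoEdgeInversion G T) {h : G}
    (hh : IsHyperbolic V h) {x y : V} (hx : x ∈ Axis T h) (hy : y ∈ Axis T h) :
    ∃ g : G, (g = h ∨ g = h⁻¹) ∧ T.dist x (g • y) = T.dist x y + transLen T h := by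
  have hy' : T.dist y (h • y) = transLen T h := hy
  have hy2 : T.dist y (h⁻¹ • y) = transLen T h := by rw [tree_dist_inv hT hAct, hy']
  have h3 : T.dist (h⁻¹ • y) (h • y) = 2 * transLen T h := by
    rw [← tree_dist_smul hT hAct h, smul_inv_smul, axis_two hT hAct hNoInv hh hy]
  have f := tree_four hT (h⁻¹ • y) (h • y) y _ x rfl
  have e := T.dist_comm (u := h⁻¹ • y) (v := y)
  have e1 := T.dist_comm (u := h • y) (v := y)
  have t1 := hT.connected.dist_triangle (u := x) (v := y) (w := h • y)
  have t2 := hT.connected.dist_triangle (u := x) (v := y) (w := h⁻¹ • y)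
  by_cases hc : T.dist x (h • y) = T.dist x y + transLen T h
  · exact ⟨h, Or.inl rfl, hc⟩
  · exact ⟨h⁻¹, Or.inr rfl, by omega⟩

/-- translation along the common segment -/
lemma tree_translate (hT : T.IsTree) (hAct : ActsByAut G T) {h : G} {x y : V} {τ : ℕ}
    (hx : T.dist x (h • x) = τ) (hy : T.dist y (h • y) = τ)
    (hxy : T.dist x (h • y) = T.dist x y + τ) {u v : V}
    (hu : T.dist x u + T.dist u y = T.dist x y) (hv : T.dist x v + T.dist v y = T.dist x y)
    (huv : T.dist x v = T.dist x u + τ) : h • u = v := by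
  have a1 := tree_dist_smul hT hAct h x u
  have a2 := tree_dist_smul hT hAct h u y
  have t1 := hT.connected.dist_triangle (u := x) (v := h • x) (w := h • u)
  have t2 := hT.connected.dist_triangle (u := x) (v := h • u) (w := h • y)
  have t3 := hT.connected.dist_triangle (u := v) (v := y) (w := h • y)
  have t4 := hT.connected.dist_triangle (u := x) (v := v) (w := h • y)
  exact tree_uniq hT (x := x) (y := h • y) (by omega) (by omega) (by omega)

lemma smul_axis (hT : T.IsTree) (hAct : ActsByAut G T) {g h : G} (hc : g * h = h * g) {v : V}
    (hv : v ∈ Axis T h) : g • v ∈ Axis T h := by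
  have hv' : T.dist v (h • v) = transLen T h := hv
  change T.dist (g • v) (h • g • v) = transLen T h
  rw [← mul_smul, ← hc, mul_smul, tree_dist_smul hT hAct, hv']

lemma tree_core (hT : T.IsTree) (hAct : ActsByAut G T) (hNoInv : NoEdgeInversion G T)
    (k : ℕ) (hAcyl : AcylindricalAction T G k)
    (h1 h2 : G) (hh1 : IsHyperbolic V h1)
    (d : ℕ) (hbd : ∀ v ∈ Axis T h1 ∩ Axis T h2, ∀ w ∈ Axis T h1 ∩ Axis T h2, T.dist v w ≤ d)
    (hdk : 3 * k + 1 ≤ d) (x y : V) (hx : x ∈ Axis T h1 ∩ Axis T h2)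
    (hy : y ∈ Axis T h1 ∩ Axis T h2) (hxy : T.dist x y = d)
    (o1 : T.dist x (h1 • y) = T.dist x y + transLen T h1)
    (o2 : T.dist x (h2 • y) = T.dist x y + transLen T h2)
    (l1 : 3 * transLen T h1 ≤ d) (l2 : 3 * transLen T h2 ≤ d) : False := by
  have hpos := axis_pos hT hh1 hx.1
  have comm_at : ∀ u, T.dist x u + T.dist u y = T.dist x y →
      T.dist x u + transLen T h1 + transLen T h2 ≤ d → h1 • h2 • u = h2 • h1 • u := by
    intro u hu hle
    obtain ⟨a, ha1, ha2⟩ := tree_interp hT y (T.dist x u + transLen T h1) x (by omega)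
    obtain ⟨b, hb1, hb2⟩ := tree_interp hT y (T.dist x u + transLen T h2) x (by omega)
    obtain ⟨c, hc1, hc2⟩ := tree_interp hT y (T.dist x u + transLen T h1 + transLen T h2) x
      (by omega)
    have r1 : h1 • u = a := tree_translate hT hAct hx.1 hy.1 o1 hu (by omega) ha1
    have r2 : h2 • u = b := tree_translate hT hAct hx.2 hy.2 o2 hu (by omega) hb1
    have r3 : h1 • b = c := tree_translate hT hAct hx.1 hy.1 o1 (by omega) (by omega) (by omega)
    have r4 : h2 • a = c := tree_translate hT hAct hx.2 hy.2 o2 (by omega) (by omega) (by omega)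
    rw [r1, r2, r3, r4]
  obtain ⟨z, hz1, hz2⟩ := tree_interp hT y (d - transLen T h1 - transLen T h2) x (by omega)
  have cx := comm_at x (by simp) (by simp; omega)
  have cz := comm_at z (by omega) (by omega)
  have fx : ((h2 * h1)⁻¹ * (h1 * h2)) • x = x := by
    rw [mul_smul, inv_smul_eq_iff, mul_smul, mul_smul, cx]
  have fz : ((h2 * h1)⁻¹ * (h1 * h2)) • z = z := by
    rw [mul_smul, inv_smul_eq_iff, mul_smul, mul_smul, cz]
  have hcomm : h1 * h2 = h2 * h1 := by
    by_contra hne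
    have hA := hAcyl ((h2 * h1)⁻¹ * (h1 * h2))
      (fun he => hne (by rw [inv_mul_eq_one] at he; exact he.symm)) ⟨x, fx⟩
    have hB : (T.dist x z : ℕ∞) ≤ setDiam T (Fixed V ((h2 * h1)⁻¹ * (h1 * h2))) :=
      le_iSup₂_of_le x fx (le_iSup₂_of_le (f := fun w _ => (T.dist x w : ℕ∞)) z fz le_rfl)
    have hC : T.dist x z ≤ k := by exact_mod_cast hB.trans hA
    omega
  have hmem : ∀ n : ℕ, h1 ^ n • x ∈ Axis T h1 ∩ Axis T h2 := by
    intro n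
    exact ⟨smul_axis hT hAct ((Commute.refl h1).pow_left n) hx.1,
      smul_axis hT hAct (Commute.pow_left hcomm n) hx.2⟩
  have q1 := hbd x hx _ (hmem (d + 1))
  have q2 := (axis_pow hT hAct hNoInv hh1 hx.1 (d + 1)).1
  nlinarith

end Helpers

/-- If `G` acts `k`-acylindrically without edge inversions on a simplicial
tree and `h1, h2` are hyperbolic with `J = Axis(h1) ∩ Axis(h2)` of finite diameter
`d ≥ 3k + 1`, then `max{τ(h1), τ(h2)} > d / 3`. -/
theorem statement13 {G V : Type*} [Group G] [MulAction G V] (T : SimpleGraph V)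
    (hT : T.IsTree) (hAct : ActsByAut G T) (hNoInv : NoEdgeInversion G T)
    (k : ℕ) (hAcyl : AcylindricalAction T G k)
    (h1 h2 : G) (hh1 : IsHyperbolic V h1) (hh2 : IsHyperbolic V h2)
    (d : ℕ) (hd : setDiam T (Axis T h1 ∩ Axis T h2) = (d : ℕ∞))
    (hdk : 3 * k + 1 ≤ d) :
    (d : ℝ) / 3 < (max (transLen T h1) (transLen T h2) : ℝ) := by
  have hbd : ∀ v ∈ Axis T h1 ∩ Axis T h2, ∀ w ∈ Axis T h1 ∩ Axis T h2, T.dist v w ≤ d := by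
    intro v hv w hw
    have hB : (T.dist v w : ℕ∞) ≤ setDiam T (Axis T h1 ∩ Axis T h2) :=
      le_iSup₂_of_le v hv (le_iSup₂_of_le (f := fun w _ => (T.dist v w : ℕ∞)) w hw le_rfl)
    rw [hd] at hB
    exact_mod_cast hB
  have hex : ∃ x ∈ Axis T h1 ∩ Axis T h2, ∃ y ∈ Axis T h1 ∩ Axis T h2, T.dist x y = d := by
    by_contra! hc
    have hle : setDiam T (Axis T h1 ∩ Axis T h2) ≤ ((d - 1 : ℕ) : ℕ∞) := by
      refine iSup₂_le fun v hv => iSup₂_le fun w hw => ?_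
      have a1 := hbd v hv w hw
      have a2 := hc v hv w hw
      have a3 : T.dist v w ≤ d - 1 := by omega
      exact_mod_cast a3
    rw [hd] at hle
    have : d ≤ d - 1 := by exact_mod_cast hle
    omega
  obtain ⟨x, hx, y, hy, hxy⟩ := hex
  by_contra hcon
  rw [not_lt, max_le_iff] at hcon
  have l1 : 3 * transLen T h1 ≤ d := by
    have : (3 * transLen T h1 : ℝ) ≤ d := by linarith [hcon.1]
    exact_mod_cast this
  have l2 : 3 * transLen T h2 ≤ d := by
    have : (3 * transLen T h2 : ℝ) ≤ d := by linarith [hcon.2]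
    exact_mod_cast this
  obtain ⟨g1, hg1, o1⟩ := tree_orient hT hAct hNoInv hh1 hx.1 hy.1
  obtain ⟨g2, hg2, o2⟩ := tree_orient hT hAct hNoInv hh2 hx.2 hy.2
  have A1 : Axis T g1 = Axis T h1 := by
    rcases hg1 with rfl | rfl
    · rfl
    · exact Axis_inv hT hAct h1
  have A2 : Axis T g2 = Axis T h2 := by
    rcases hg2 with rfl | rfl
    · rfl
    · exact Axis_inv hT hAct h2
  have L1 : transLen T g1 = transLen T h1 := by
    rcases hg1 with rfl | rfl
    · rfl
    · exact transLen_inv hT hAct h1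
  have L2 : transLen T g2 = transLen T h2 := by
    rcases hg2 with rfl | rfl
    · rfl
    · exact transLen_inv hT hAct h2
  have H1 : IsHyperbolic V g1 := by
    rcases hg1 with rfl | rfl
    · exact hh1
    · exact hh1.inv'
  rw [← A1, ← A2] at hbd hx hy
  rw [← L1] at o1 l1
  rw [← L2] at o2 l2
  exact tree_core hT hAct hNoInv k hAcyl g1 g2 H1 d hbd hdk x y hx hy hxy o1 o2 l1 l2
end

section
/- Let G be a group acting without edge inversions on a simplicial tree T, let g ∈ G be elliptic, let h ∈ G be hyperbolic, and let ℓ be a nonzero integer such that Fix(g^ℓ) ∩ Axis(h) = ∅. Then for every integer p ≥ 1, the minimal simplicial distance between the sets Fix(g^ℓ) and Fix(h^p·g^ℓ·h^{−p}) is at least p·τ(h) + 2; in particular these two sets are disjoint. -/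
open SimpleGraph Pointwise

namespace Tree14

variable {V : Type*} {T : SimpleGraph V}

lemma closer_unique (hT : T.IsTree) {x a b y : V} (ha : T.Adj x a) (hb : T.Adj x b)
    (h1 : T.dist a y + 1 = T.dist x y) (h2 : T.dist b y + 1 = T.dist x y) : a = b := by
  obtain ⟨p, hp⟩ := hT.1.exists_walk_length_eq_dist a y
  obtain ⟨q, hq⟩ := hT.1.exists_walk_length_eq_dist b y
  have P : (Walk.cons ha p).IsPath := Walk.isPath_of_length_eq_dist _ (by simp [hp, h1])
  have Q : (Walk.cons hb q).IsPath := Walk.isPath_of_length_eq_dist _ (by simp [hq, h2])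
  have := hT.2.path_unique ⟨_, P⟩ ⟨_, Q⟩
  have h3 := congrArg (fun r : T.Path x y => r.1.snd) this
  simpa using h3

lemma exists_next (hT : T.IsTree) {x y : V} (hne : x ≠ y) :
    ∃ a, T.Adj x a ∧ T.dist a y + 1 = T.dist x y := by
  obtain ⟨p, hp⟩ := hT.1.exists_walk_length_eq_dist x y
  cases p with
  | nil => exact absurd rfl hne
  | @cons _ a _ ha p =>
    refine ⟨a, ha, ?_⟩
    simp only [Walk.length_cons] at hp
    have h1 := SimpleGraph.dist_le p
    have h2 := hT.1.dist_triangle (u := x) (v := a) (w := y)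
    have h3 : T.dist x a = 1 := SimpleGraph.dist_eq_one_iff_adj.2 ha
    omega

lemma adj_step (hT : T.IsTree) (y : V) {x a : V} (ha : T.Adj x a) :
    T.dist a y + 1 = T.dist x y ∨ T.dist a y = T.dist x y + 1 := by
  have := hT.dist_eq_dist_add_one_of_adj y ha
  rw [T.dist_comm (u := y) (v := x), T.dist_comm (u := y) (v := a)] at this
  omega

lemma local_geod (hT : T.IsTree) (y z : V) (n : ℕ) : ∀ x x' : V, T.dist x z = n → T.Adj x x' →
    T.dist x' y + 1 = T.dist x y → T.dist x' z = T.dist x z + 1 →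
    T.dist y z = T.dist x y + T.dist x z := by
  induction n with
  | zero =>
    intro x x' hn _ _ _
    have : x = z := hT.1.dist_eq_zero_iff.1 hn
    subst this
    simp [T.dist_comm]
  | succ n ih =>
    intro x x' hn hadj h1 h2
    have hne : x ≠ z := by rintro rfl; simp at hn
    obtain ⟨x'', hadj', h3⟩ := exists_next hT hne
    have h4 : T.dist x'' y = T.dist x y + 1 := by
      rcases adj_step hT y hadj' with h | h
      · have := closer_unique hT hadj hadj' h1 h
        subst this
        omega
      · exact h
    have := ih x'' x (by omega) hadj'.symm (by omega) (by omega)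
    omega

lemma four_point (hT : T.IsTree) (y z w : V) (n : ℕ) : ∀ x : V, T.dist x y = n →
    T.dist x y + T.dist z w ≤ T.dist x z + T.dist y w ∨
    T.dist x y + T.dist z w ≤ T.dist x w + T.dist y z := by
  induction n with
  | zero =>
    intro x hn
    have : x = y := hT.1.dist_eq_zero_iff.1 hn
    subst this
    have := hT.1.dist_triangle (u := z) (v := x) (w := w)
    rw [T.dist_comm (u := z) (v := x)] at this
    left; omega
  | succ n ih =>
    intro x hn
    have hne : x ≠ y := by rintro rfl; simp at hn
    obtain ⟨x', hadj, h1⟩ := exists_next hT hne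
    have tz := hT.1.dist_triangle (u := z) (v := x) (w := w)
    rw [T.dist_comm (u := z) (v := x)] at tz
    rcases adj_step hT z hadj with hz | hz
    · rcases adj_step hT w hadj with hw | hw
      · have := ih x' (by omega)
        omega
      · have := local_geod hT y w _ x x' rfl hadj h1 hw
        omega
    · have := local_geod hT y z _ x x' rfl hadj h1 hz
      omega

/-- segment lemma -/
lemma seg (hT : T.IsTree) {a b m : V} (z : V) (hm : T.dist a m + T.dist m b = T.dist a b) :
    T.dist z m + T.dist a m ≤ T.dist z a ∨ T.dist z m + T.dist m b ≤ T.dist z b := by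
  have := four_point hT m a b _ z rfl
  rw [T.dist_comm (u := m) (v := a)] at this
  omega

section act

variable {G : Type*} [Group G] [MulAction G V]

lemma dist_smul (hT : T.IsTree) (hAct : ActsByAut G T) (k : G) (x y : V) :
    T.dist (k • x) (k • y) = T.dist x y := by
  have key : ∀ (k : G) (x y : V), T.dist (k • x) (k • y) ≤ T.dist x y := by
    intro k x y
    obtain ⟨p, hp⟩ := hT.1.exists_walk_length_eq_dist x y
    let f : T →g T := ⟨fun v => k • v, fun {a b} h => hAct k a b h⟩
    have := SimpleGraph.dist_le (p.map f)
    rw [Walk.length_map, hp] at this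
    exact this
  apply le_antisymm (key k x y)
  have := key k⁻¹ (k • x) (k • y)
  simpa using this

lemma disp_convex (hT : T.IsTree) (hAct : ActsByAut G T) (k : G) {a b m : V} {c : ℕ}
    (ha : T.dist a (k • a) ≤ c) (hb : T.dist b (k • b) ≤ c)
    (hm : T.dist a m + T.dist m b = T.dist a b) : T.dist m (k • m) ≤ c := by
  have e1 := dist_smul hT hAct k a m
  have e2 := dist_smul hT hAct k m b
  have e3 := dist_smul hT hAct k a b
  have s1 := seg hT (k • m) hm
  have hkm : T.dist (k • a) (k • m) + T.dist (k • m) (k • b) = T.dist (k • a) (k • b) := by omega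
  have s2 := seg hT a hkm
  have s3 := seg hT b hkm
  have t1 := hT.1.dist_triangle (u := a) (v := b) (w := k • b)
  have t2 := hT.1.dist_triangle (u := b) (v := a) (w := k • a)
  rw [T.dist_comm (u := k • m) (v := m), T.dist_comm (u := k • m) (v := a),
    T.dist_comm (u := k • m) (v := b)] at s1
  rw [T.dist_comm (u := b) (v := a)] at t2
  omega

lemma transLen_le (T : SimpleGraph V) (k : G) (v : V) : transLen T k ≤ T.dist v (k • v) :=
  ciInf_le (OrderBot.bddBelow _) v

lemma axis_nonempty [Nonempty V] (T : SimpleGraph V) (k : G) : (Axis T k).Nonempty := by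
  obtain ⟨v, hv⟩ := Nat.sInf_mem (Set.range_nonempty (fun v : V => T.dist v (k • v)))
  exact ⟨v, hv⟩

lemma axis_smul (hT : T.IsTree) (hAct : ActsByAut G T) (k : G) {a : V} (ha : a ∈ Axis T k) :
    k • a ∈ Axis T k := by
  have := dist_smul hT hAct k a (k • a)
  simp only [Axis, Set.mem_setOf_eq] at *
  omega

lemma axis_pow (hT : T.IsTree) (hAct : ActsByAut G T) (k : G) {a : V} (ha : a ∈ Axis T k)
    (n : ℕ) : k ^ n • a ∈ Axis T k := by
  induction n with
  | zero => simpa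
  | succ n ih => rw [pow_succ', mul_smul]; exact axis_smul hT hAct k ih

lemma axis_convex (hT : T.IsTree) (hAct : ActsByAut G T) (k : G) {a b m : V}
    (ha : a ∈ Axis T k) (hb : b ∈ Axis T k) (hm : T.dist a m + T.dist m b = T.dist a b) :
    m ∈ Axis T k :=
  le_antisymm (disp_convex hT hAct k (le_of_eq ha) (le_of_eq hb) hm) (transLen_le T k m)

lemma transLen_pos (hT : T.IsTree) {k : G} (hk : IsHyperbolic V k) : 0 < transLen T k := by
  have := hT.1.nonempty
  obtain ⟨a, ha⟩ := axis_nonempty T k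
  rw [← ha]
  exact hT.1.pos_dist_of_ne (fun h => hk ⟨a, h.symm⟩)

lemma dist_two (hT : T.IsTree) (hAct : ActsByAut G T) (hNoInv : NoEdgeInversion G T) {k : G}
    (hk : IsHyperbolic V k) {a : V} (ha : a ∈ Axis T k) :
    2 * transLen T k ≤ T.dist a (k • k • a) := by
  by_contra hlt
  have hpos := transLen_pos hT hk
  have ha' : T.dist a (k • a) = transLen T k := ha
  have ha2 := dist_smul hT hAct k a (k • a)
  have hne : k • a ≠ a := fun h => hk ⟨a, h⟩
  by_cases h1 : transLen T k = 1
  · have adj : T.Adj a (k • a) := SimpleGraph.dist_eq_one_iff_adj.1 (by omega)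
    have adj2 : T.Adj (k • a) (k • k • a) := SimpleGraph.dist_eq_one_iff_adj.1 (by omega)
    have h3 := hT.dist_ne_of_adj a adj2
    have h0 : T.dist a (k • k • a) = 0 := by omega
    exact hNoInv k a (k • a) adj ⟨rfl, (hT.1.dist_eq_zero_iff.1 h0).symm⟩
  · obtain ⟨m, hadj, hm⟩ := exists_next hT hne
    have hd : T.dist (k • a) m = 1 := SimpleGraph.dist_eq_one_iff_adj.2 hadj
    have hseg : T.dist a m + T.dist m (k • a) = T.dist a (k • a) := by
      rw [T.dist_comm (u := a) (v := m), T.dist_comm (u := m) (v := k • a),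
        T.dist_comm (u := a) (v := k • a)]
      omega
    have e1 := dist_smul hT hAct k a m
    have e2 := dist_smul hT hAct k m (k • a)
    have s1 := seg hT (k • k • a) hseg
    have hseg2 : T.dist (k • a) (k • m) + T.dist (k • m) (k • k • a)
      = T.dist (k • a) (k • k • a) := by omega
    have s2 := seg hT m hseg2
    have hmin := transLen_le T k m
    rw [T.dist_comm (u := k • k • a) (v := m), T.dist_comm (u := k • k • a) (v := a),
      T.dist_comm (u := k • k • a) (v := k • a)] at s1
    rw [T.dist_comm (u := k • a) (v := m)] at hd
    omega

lemma dist_pow (hT : T.IsTree) (hAct : ActsByAut G T) (hNoInv : NoEdgeInversion G T) {k : G}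
    (hk : IsHyperbolic V k) {a : V} (ha : a ∈ Axis T k) (n : ℕ) :
    T.dist a (k ^ n • a) = n * transLen T k ∧
    T.dist a (k ^ (n + 1) • a) = (n + 1) * transLen T k := by
  have ha' : T.dist a (k • a) = transLen T k := ha
  induction n with
  | zero => simp [ha']
  | succ n ih =>
    refine ⟨by simpa using ih.2, ?_⟩
    have hpos := transLen_pos hT hk
    have hn := axis_pow hT hAct k ha n
    have hn1 := axis_pow hT hAct k ha (n + 1)
    have d2 := dist_two hT hAct hNoInv hk hn
    simp only [Axis, Set.mem_setOf_eq] at hn hn1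
    simp only [← mul_smul, ← pow_succ'] at hn hn1 d2
    have f := four_point hT (k ^ (n + 1) • a) (k ^ n • a) (k ^ (n + 1 + 1) • a) _ a rfl
    have t := hT.1.dist_triangle (u := a) (v := k ^ (n + 1) • a) (w := k ^ (n + 1 + 1) • a)
    rw [T.dist_comm (u := k ^ (n + 1) • a) (v := k ^ n • a)] at f
    obtain ⟨i1, i2⟩ := ih
    push_cast
    have r1 : (n + 1) * transLen T k = n * transLen T k + transLen T k := by ring
    have r2 : (n + 1 + 1) * transLen T k = n * transLen T k + 2 * transLen T k := by ring
    omega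

lemma exists_proj [Nonempty V] (hT : T.IsTree) (hAct : ActsByAut G T) (k : G) (v : V) :
    ∃ a ∈ Axis T k, ∀ b ∈ Axis T k, T.dist v b = T.dist v a + T.dist a b := by
  obtain ⟨a, ha, hmin⟩ := WellFounded.has_min (measure (fun a => T.dist v a)).wf _
    (axis_nonempty T k)
  refine ⟨a, ha, fun b hb => ?_⟩
  by_cases hab : a = b
  · subst hab; simp
  obtain ⟨m, hadj, hm⟩ := exists_next hT hab
  have hd : T.dist a m = 1 := SimpleGraph.dist_eq_one_iff_adj.2 hadj
  have hseg : T.dist a m + T.dist m b = T.dist a b := by omega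
  have hmA := axis_convex hT hAct k ha hb hseg
  have h1 : ¬ (T.dist v m < T.dist v a) := hmin m hmA
  have h2 := hT.dist_ne_of_adj v hadj
  have s := seg hT v hseg
  have t := hT.1.dist_triangle (u := v) (v := a) (w := b)
  omega

lemma proj_dist (hT : T.IsTree) {v w a b : V} (hab : a ≠ b)
    (hv : T.dist v b = T.dist v a + T.dist a b) (hw : T.dist w a = T.dist w b + T.dist b a) :
    T.dist v w = T.dist v a + T.dist a b + T.dist w b := by
  have hpos := hT.1.pos_dist_of_ne hab
  have f := four_point hT b w a _ v rfl
  have t1 := hT.1.dist_triangle (u := v) (v := b) (w := w)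
  rw [T.dist_comm (u := b) (v := a)] at *
  rw [T.dist_comm (u := b) (v := w)] at *
  omega

end act

end Tree14

/-- If `G` acts without edge inversions on a simplicial tree, `g` is
elliptic, `h` is hyperbolic, `ℓ ≠ 0` and `Fix(g^ℓ) ∩ Axis(h) = ∅`, then for every `p ≥ 1`
the distance between `Fix(g^ℓ)` and `Fix(h^p * g^ℓ * h^(-p))` is at least `p·τ(h) + 2`;
in particular the two sets are disjoint. -/
theorem statement14 {G V : Type*} [Group G] [MulAction G V] (T : SimpleGraph V)
    (hT : T.IsTree) (hAct : ActsByAut G T) (hNoInv : NoEdgeInversion G T)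
    (g h : G) (hg : IsElliptic V g) (hh : IsHyperbolic V h)
    (l : ℤ) (hl : l ≠ 0)
    (hdisj : Fixed V (g ^ l) ∩ Axis T h = (∅ : Set V))
    (p : ℕ) (hp : 1 ≤ p) :
    p * transLen T h + 2 ≤
        setDist T (Fixed V (g ^ l)) (Fixed V (h ^ p * g ^ l * (h ^ p)⁻¹)) ∧
      Fixed V (g ^ l) ∩ Fixed V (h ^ p * g ^ l * (h ^ p)⁻¹) = (∅ : Set V) := by

  have := hT.1.nonempty
  have hconj : ∀ w ∈ Fixed V (h ^ p * g ^ l * (h ^ p)⁻¹),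
      ∃ u ∈ Fixed V (g ^ l), w = h ^ p • u := by
    intro w hw
    refine ⟨(h ^ p)⁻¹ • w, ?_, by simp⟩
    simp only [Fixed, Set.mem_setOf_eq, mul_smul] at hw ⊢
    rw [eq_inv_smul_iff]
    exact hw
  have hposd : ∀ v ∈ Fixed V (g ^ l), ∀ a ∈ Axis T h, 1 ≤ T.dist v a := by
    intro v hv a ha
    apply hT.1.pos_dist_of_ne
    rintro rfl
    have : v ∈ (∅ : Set V) := hdisj ▸ ⟨hv, ha⟩
    exact this
  have main : ∀ v ∈ Fixed V (g ^ l), ∀ w ∈ Fixed V (h ^ p * g ^ l * (h ^ p)⁻¹),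
      p * transLen T h + 2 ≤ T.dist v w := by
    intro v hv w hw
    obtain ⟨u, hu, rfl⟩ := hconj w hw
    obtain ⟨a, ha, hpa⟩ := Tree14.exists_proj hT hAct h v
    obtain ⟨b, hb, hpb⟩ := Tree14.exists_proj hT hAct h u
    have hab : a = b := by
      by_contra hab
      have hd := Tree14.proj_dist hT hab (hpa b hb) (hpb a ha)
      have h1 := hpb a ha
      rw [T.dist_comm (u := u) (v := a), T.dist_comm (u := b) (v := a)] at h1
      have hz : T.dist a (g ^ l • a) ≤ 0 := by
        refine Tree14.disp_convex hT hAct (g ^ l) (a := v) (b := u) ?_ ?_ (by omega)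
        · have : g ^ l • v = v := hv
          simp [this]
        · have : g ^ l • u = u := hu
          simp [this]
      have hfix : a ∈ Fixed V (g ^ l) :=
        (hT.1.dist_eq_zero_iff.1 (Nat.le_zero.1 hz)).symm
      have := hposd a hfix a ha
      simp at this
    subst hab
    have hdp := (Tree14.dist_pow hT hAct hNoInv hh ha p).1
    have hpos := Tree14.transLen_pos hT hh
    have hpp : 0 < p * transLen T h := Nat.mul_pos hp hpos
    have hne : a ≠ h ^ p • a := by
      intro he
      rw [← he] at hdp
      simp at hdp
      omega
    have hA := Tree14.axis_pow hT hAct h ha p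
    -- the translate of `a` backwards is also on the axis
    have hback : (h ^ p)⁻¹ • a ∈ Axis T h := by
      have e := Tree14.dist_smul hT hAct (h ^ p) ((h ^ p)⁻¹ • a) (h • (h ^ p)⁻¹ • a)
      have c : h ^ p • h • (h ^ p)⁻¹ • a = h • a := by
        simp only [← mul_smul]
        congr 1
        rw [← mul_assoc, ← pow_succ, pow_succ']
        group
      rw [c, smul_inv_smul] at e
      exact e.symm.trans ha
    have h2 := hpb _ hback
    have e1 := Tree14.dist_smul hT hAct (h ^ p) u ((h ^ p)⁻¹ • a)
    have e2 := Tree14.dist_smul hT hAct (h ^ p) a ((h ^ p)⁻¹ • a)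
    have e3 := Tree14.dist_smul hT hAct (h ^ p) u a
    rw [smul_inv_smul] at e1 e2
    have hd := Tree14.proj_dist hT hne (hpa _ hA) (w := h ^ p • u) (by omega)
    have p1 := hposd v hv a ha
    have p2 := hposd u hu a ha
    omega
  constructor
  · unfold setDist
    apply le_csInf
    · obtain ⟨v, hv⟩ := hg
      have hvl : g ^ l • v = v := by
        have : g ^ l ∈ MulAction.stabilizer G v :=
          Subgroup.zpow_mem _ (MulAction.mem_stabilizer_iff.2 hv) l
        exact MulAction.mem_stabilizer_iff.1 this
      refine ⟨_, v, hvl, h ^ p • v, ?_, rfl⟩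
      simp [Fixed, mul_smul, hvl]
    · rintro n ⟨v, hv, w, hw, rfl⟩
      exact main v hv w hw
  · ext v
    simp only [Set.mem_inter_iff, Set.mem_empty_iff_false, iff_false, not_and]
    intro hv hw
    have := main v hv v hw
    simp at this
end

section
/- Let G be a group acting k-acylindrically and without edge inversions on a simplicial tree T, where k is a nonnegative integer. Let g ∈ G be elliptic, let h ∈ G be hyperbolic, let ℓ be a nonzero integer with g^ℓ ≠ 1, and let p be an integer with p ≥ k+1. Then Fix(g^ℓ) ∩ Fix(h^p·g^ℓ·h^{−p}) = ∅. -/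
open SimpleGraph Pointwise

theorem closer_unique {V : Type*} (T : SimpleGraph V) (hT : T.IsTree) (r w a b : V)
    (ha : T.Adj a w) (hb : T.Adj b w) (hda : T.dist r w = T.dist r a + 1)
    (hdb : T.dist r w = T.dist r b + 1) : a = b := by
  obtain ⟨p, hp⟩ := hT.1.exists_walk_length_eq_dist r a
  obtain ⟨q, hq⟩ := hT.1.exists_walk_length_eq_dist r b
  have h1 : (p.concat ha).IsPath := Walk.isPath_of_length_eq_dist _ (by simp [hp, hda])
  have h2 : (q.concat hb).IsPath := Walk.isPath_of_length_eq_dist _ (by simp [hq, hdb])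
  have h3 : p.concat ha = q.concat hb :=
    congrArg Subtype.val (hT.2.path_unique ⟨_, h1⟩ ⟨_, h2⟩)
  have h4 := congrArg Walk.penultimate h3
  simpa using h4

theorem seq_dist {V : Type*} (T : SimpleGraph V) (hT : T.IsTree) (f : ℕ → V)
    (hadj : ∀ n, T.Adj (f n) (f (n + 1))) (hnb : ∀ n, f n ≠ f (n + 2)) (n : ℕ) :
    T.dist (f 0) (f n) = n ∧ T.dist (f 0) (f (n + 1)) = n + 1 := by
  induction n with
  | zero => exact ⟨by simp, by simpa using hadj 0⟩
  | succ n ih =>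
    refine ⟨ih.2, ?_⟩
    have := hT.dist_eq_dist_add_one_of_adj (f 0) (hadj (n + 1))
    rcases this with h | h
    · exact absurd (closer_unique T hT (f 0) (f (n + 1)) (f n) (f (n + 2)) (hadj n)
        (hadj (n + 1)).symm (by omega) (by simpa using h)) (hnb n)
    · simp only [ih.2] at h
      exact h

theorem seq_dist_le {V : Type*} (T : SimpleGraph V) (hT : T.IsTree) (f : ℕ → V)
    (hadj : ∀ n, T.Adj (f n) (f (n + 1))) (a n : ℕ) :
    T.dist (f a) (f (a + n)) ≤ n := by
  induction n with
  | zero => simp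
  | succ n ih =>
    have h1 := hT.1.dist_triangle (u := f a) (v := f (a + n)) (w := f (a + n + 1))
    have h2 := dist_eq_one_iff_adj.mpr (hadj (a + n))
    rw [← add_assoc]
    omega

theorem act_dist_le {G V : Type*} [Group G] [MulAction G V] (T : SimpleGraph V)
    (hT : T.IsTree) (hAct : ActsByAut G T) (g : G) (u v : V) :
    T.dist (g • u) (g • v) ≤ T.dist u v := by
  obtain ⟨p, hp⟩ := hT.1.exists_walk_length_eq_dist u v
  let F : T →g T := ⟨fun x => g • x, fun {a b} hab => hAct g a b hab⟩
  have := dist_le (p.map F)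
  rw [Walk.length_map, hp] at this
  exact this

/-- A hyperbolic element has a vertex moved linearly by its powers. -/
theorem hyp_axis {G V : Type*} [Group G] [MulAction G V] (T : SimpleGraph V)
    (hT : T.IsTree) (hAct : ActsByAut G T) (hNoInv : NoEdgeInversion G T)
    (h : G) (hh : IsHyperbolic V h) : ∃ v : V, ∀ n : ℕ, n ≤ T.dist v (h ^ n • v) := by
  haveI := hT.1.nonempty
  obtain ⟨v, hv⟩ : ∃ v : V, ∀ w, T.dist v (h • v) ≤ T.dist w (h • w) := by
    obtain ⟨v, hv⟩ := Set.range_nonempty (fun v : V => T.dist v (h • v)) |> fun hne =>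
      Nat.sInf_mem hne
    exact ⟨v, fun w => hv.trans_le (Nat.sInf_le ⟨w, rfl⟩)⟩
  obtain ⟨P, hP, hlen⟩ := hT.1.exists_path_of_dist v (h • v)
  set t := T.dist v (h • v) with ht
  have htpos : 0 < t := hT.1.pos_dist_of_ne fun e => hh ⟨v, e.symm⟩
  let f : ℕ → V := fun n => h ^ (n / t) • P.getVert (n % t)
  have hshift : ∀ n, f (n + t) = h • f n := by
    intro n
    simp only [f]
    rw [Nat.add_div_right _ htpos, Nat.add_mod_right, pow_succ', mul_smul]
  have hshiftq : ∀ q n, f (n + q * t) = h ^ q • f n := by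
    intro q n
    induction q with
    | zero => simp
    | succ q ih => rw [add_mul, one_mul, ← add_assoc, hshift, ih, pow_succ', mul_smul]
  have hlow : ∀ n ≤ t, f n = P.getVert n := by
    intro n hn
    rcases hn.lt_or_eq with hn | hn
    · simp [f, Nat.div_eq_of_lt hn, Nat.mod_eq_of_lt hn]
    · subst hn
      have e : P.getVert t = h • v := by rw [← hlen]; exact P.getVert_length
      rw [e]
      simp [f, Nat.div_self htpos]
  have hadj : ∀ n, T.Adj (f n) (f (n + 1)) := by
    intro n
    have hr := Nat.mod_lt n htpos
    have e : n = n % t + n / t * t := by rw [mul_comm]; exact (Nat.mod_add_div n t).symm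
    have e2 : n + 1 = (n % t + 1) + n / t * t := by omega
    have h1 : f n = h ^ (n / t) • f (n % t) := by rw [← hshiftq, ← e]
    have h2 : f (n + 1) = h ^ (n / t) • f (n % t + 1) := by rw [← hshiftq, ← e2]
    rw [h1, h2, hlow _ hr.le, hlow _ hr]
    exact hAct _ _ _ (P.adj_getVert_succ (by omega))
  have hnb0 : ∀ r < t, f r ≠ f (r + 2) := by
    intro r hr heq
    by_cases h2 : r + 2 ≤ t
    · rw [hlow _ hr.le, hlow _ h2] at heq
      have := hP.getVert_injOn (by simp; omega) (by simp; omega) heq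
      omega
    · have hr1 : r + 2 = 1 + t := by omega
      rw [hr1, hshift] at heq
      by_cases ht1 : t = 1
      · have hr0 : r = 0 := by omega
        have h01 : f 1 = h • f 0 := by rw [← hshift, ht1]
        rw [hr0] at heq
        exact hNoInv h (f 0) (f 1) (hadj 0) ⟨h01.symm, heq.symm⟩
      · have h3 := hv (f 1)
        have h4 := seq_dist_le T hT f hadj 1 (r - 1)
        rw [show 1 + (r - 1) = r by omega, heq] at h4
        omega
  have hnb : ∀ n, f n ≠ f (n + 2) := by
    intro n
    have hr := Nat.mod_lt n htpos
    have e : n = n % t + n / t * t := by rw [mul_comm]; exact (Nat.mod_add_div n t).symm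
    have e2 : n + 2 = (n % t + 2) + n / t * t := by omega
    have h1 : f n = h ^ (n / t) • f (n % t) := by rw [← hshiftq, ← e]
    have h2 : f (n + 2) = h ^ (n / t) • f (n % t + 2) := by rw [← hshiftq, ← e2]
    rw [h1, h2]
    exact fun e => hnb0 _ hr (MulAction.injective _ e)
  refine ⟨v, fun n => ?_⟩
  have h0 : f 0 = v := by simp [f]
  have h1 := (seq_dist T hT f hadj hnb (0 + n * t)).1
  rw [hshiftq, h0] at h1
  rw [h1]
  nlinarith

theorem hyp_displacement {G V : Type*} [Group G] [MulAction G V] (T : SimpleGraph V)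
    (hT : T.IsTree) (hAct : ActsByAut G T) (hNoInv : NoEdgeInversion G T)
    (h : G) (hh : IsHyperbolic V h) (u : V) (p : ℕ) : p ≤ T.dist u (h ^ p • u) := by
  obtain ⟨v, hv⟩ := hyp_axis T hT hAct hNoInv h hh
  have hm : ∀ m : ℕ, T.dist u ((h ^ p) ^ m • u) ≤ m * T.dist u (h ^ p • u) := by
    intro m
    induction m with
    | zero => simp
    | succ m ih =>
      have h1 := hT.1.dist_triangle (u := u) (v := (h ^ p) ^ m • u) (w := (h ^ p) ^ (m + 1) • u)
      have h2 := act_dist_le T hT hAct ((h ^ p) ^ m) u (h ^ p • u)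
      rw [← mul_smul, ← pow_succ] at h2
      rw [add_mul, one_mul]
      omega
  by_contra hlt
  push Not at hlt
  set D := T.dist v u with hD
  have h1 := hv (p * (2 * D + 1))
  have h2 := hm (2 * D + 1)
  rw [← pow_mul] at h2
  set H := h ^ (p * (2 * D + 1)) with hH
  have h3 := hT.1.dist_triangle (u := v) (v := u) (w := H • v)
  have h4 := hT.1.dist_triangle (u := u) (v := H • u) (w := H • v)
  have h5 := act_dist_le T hT hAct H u v
  rw [T.dist_comm (u := u) (v := v)] at h5
  have h6 : (2 * D + 1) * (T.dist u (h ^ p • u) + 1) ≤ (2 * D + 1) * p :=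
    Nat.mul_le_mul_left _ hlt
  nlinarith

/-- If `G` acts `k`-acylindrically without edge inversions on a simplicial
tree, `g` is elliptic, `h` is hyperbolic, `ℓ ≠ 0` with `g^ℓ ≠ 1`, and `p ≥ k + 1`, then
`Fix(g^ℓ) ∩ Fix(h^p * g^ℓ * h^(-p)) = ∅`. -/
theorem statement15 {G V : Type*} [Group G] [MulAction G V] (T : SimpleGraph V)
    (hT : T.IsTree) (hAct : ActsByAut G T) (hNoInv : NoEdgeInversion G T)
    (k : ℕ) (hAcyl : AcylindricalAction T G k)
    (g h : G) (hg : IsElliptic V g) (hh : IsHyperbolic V h)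
    (l : ℤ) (hl : l ≠ 0) (hgl : g ^ l ≠ 1)
    (p : ℕ) (hp : k + 1 ≤ p) :
    Fixed V (g ^ l) ∩ Fixed V (h ^ p * g ^ l * (h ^ p)⁻¹) = (∅ : Set V) := by
  rw [Set.eq_empty_iff_forall_notMem]
  rintro v ⟨h1, h2⟩
  have h1' : g ^ l • v = v := h1
  have h2' : (h ^ p * g ^ l * (h ^ p)⁻¹) • v = v := h2
  have h3 : g ^ l • ((h ^ p)⁻¹ • v) = (h ^ p)⁻¹ • v := by
    rw [mul_smul, mul_smul] at h2'
    exact (inv_smul_eq_iff.mpr h2'.symm).symm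
  have h4 := hAcyl (g ^ l) hgl ⟨v, h1'⟩
  have h5 : (T.dist ((h ^ p)⁻¹ • v) v : ℕ∞) ≤ setDiam T (Fixed V (g ^ l)) := by
    unfold setDiam
    exact le_trans (le_iSup₂ (f := fun w (_ : w ∈ Fixed V (g ^ l)) =>
      (T.dist ((h ^ p)⁻¹ • v) w : ℕ∞)) v h1')
      (le_iSup₂ (f := fun u (_ : u ∈ Fixed V (g ^ l)) => ⨆ w ∈ Fixed V (g ^ l),
        (T.dist u w : ℕ∞)) ((h ^ p)⁻¹ • v) h3)
  have h6 : T.dist ((h ^ p)⁻¹ • v) v ≤ k := by exact_mod_cast h5.trans h4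
  have h7 := hyp_displacement T hT hAct hNoInv h hh ((h ^ p)⁻¹ • v) p
  rw [smul_inv_smul] at h7
  omega
end

section
/- For every real number x > 0 and every integer k ≥ 1, if e^{−6x} < log(1 + 4/(e^{(4k+10)·x} − 1)), then x ≤ 21/125. Moreover, for every real number x with 0 < x ≤ 21/125, one has 2x < e^{−6x}. -/
theorem aux_poly (t : ℝ) (ht : 1.398 ≤ t) :
    4 * t ^ 6 ≤ (t ^ 3 + 1 / 2) * (t ^ 7 - 1) := by
  obtain ⟨s, hs, rfl⟩ : ∃ s : ℝ, 0 ≤ s ∧ t = s + 1.398 := ⟨t - 1.398, by linarith, by ring⟩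
  rw [← sub_nonneg]
  ring_nf
  positivity

/-- For every real `x > 0` and integer `k ≥ 1`, if
`e^{−6x} < log(1 + 4/(e^{(4k+10)x} − 1))` then `x ≤ 21/125`; moreover for every real `x`
with `0 < x ≤ 21/125` one has `2x < e^{−6x}`. -/
theorem statement16 :
    (∀ (x : ℝ) (k : ℕ), 0 < x → 1 ≤ k →
        Real.exp (-(6 * x)) <
            Real.log (1 + 4 / (Real.exp (((4 * k : ℝ) + 10) * x) - 1)) →
          x ≤ 21 / 125) ∧
      (∀ x : ℝ, 0 < x → x ≤ 21 / 125 → 2 * x < Real.exp (-(6 * x))) := by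
  refine ⟨?_, ?_⟩
  · intro x k hx hk h
    by_contra! hc
    have ht : 1.398 ≤ Real.exp (2 * x) := by
      have h1 := Real.sum_le_exp_of_nonneg (x := 0.336) (by norm_num) 4
      have h2 : Real.exp (42 / 125) ≤ Real.exp (2 * x) := Real.exp_le_exp.2 (by linarith)
      norm_num [Finset.sum_range_succ, Nat.factorial] at h1 ⊢
      linarith
    have hp := aux_poly _ ht
    set t := Real.exp (2 * x) with htd
    have ht0 : 0 < t := Real.exp_pos _
    have h6 : Real.exp (-(6 * x)) = (t ^ 3)⁻¹ := by
      rw [htd, ← Real.exp_nat_mul, ← Real.exp_neg]; congr 1; push_cast; ring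
    have h14 : t ^ 7 ≤ Real.exp (((4 * k : ℝ) + 10) * x) := by
      rw [htd, ← Real.exp_nat_mul]
      apply Real.exp_le_exp.2
      have : (1 : ℝ) ≤ k := by exact_mod_cast hk
      push_cast
      nlinarith
    have h7 : 1 < t ^ 7 := one_lt_pow₀ (by linarith) (by norm_num)
    have hd : 4 / (Real.exp (((4 * k : ℝ) + 10) * x) - 1) ≤ 4 / (t ^ 7 - 1) := by
      apply div_le_div_of_nonneg_left (by norm_num) (by linarith) (by linarith)
    have hpos : 0 ≤ 4 / (Real.exp (((4 * k : ℝ) + 10) * x) - 1) :=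
      div_nonneg (by norm_num) (by linarith)
    have hq := Real.quadratic_le_exp_of_nonneg (Real.exp_pos (-(6 * x))).le
    have hb : 4 / (t ^ 7 - 1) ≤ (t ^ 3)⁻¹ + (t ^ 3)⁻¹ ^ 2 / 2 := by
      rw [div_le_iff₀ (by linarith)]
      have e : ((t ^ 3)⁻¹ + (t ^ 3)⁻¹ ^ 2 / 2) * (t ^ 7 - 1)
          = (t ^ 3 + 1 / 2) * (t ^ 7 - 1) / t ^ 6 := by
        field_simp
      rw [e, le_div_iff₀ (by positivity)]
      exact hp
    rw [Real.lt_log_iff_exp_lt (by linarith)] at h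
    rw [h6] at hq h
    linarith
  · intro x hx hx2
    have h1 : Real.exp (-1.008) ≤ Real.exp (-(6 * x)) := Real.exp_le_exp.2 (by linarith)
    have h2 : Real.exp (-1.008) = (Real.exp 1)⁻¹ * Real.exp (-0.008) := by
      rw [← Real.exp_neg, ← Real.exp_add]; norm_num
    have h3 := Real.add_one_le_exp (-0.008 : ℝ)
    have h4 := Real.exp_one_lt_d9
    have h5 : (2.72 : ℝ)⁻¹ ≤ (Real.exp 1)⁻¹ := by
      apply inv_anti₀ (Real.exp_pos _); linarith
    have h6 : (2.72 : ℝ)⁻¹ * 0.992 ≤ (Real.exp 1)⁻¹ * Real.exp (-0.008) := by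
      apply mul_le_mul h5 (by linarith) (by norm_num) (by positivity)
    rw [← h2] at h6
    have h7 : (0.336 : ℝ) < (2.72 : ℝ)⁻¹ * 0.992 := by norm_num
    linarith
end
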